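/- Let C be an Ω-tropical curve and let C' be a plane tropical curve with C = C' ∩ Ω. Then there exists a unique tropical polynomial F' : ℝ² → ℝ that vanishes identically on ∂Ω and whose corner locus, with its canonical weights, equals C'. Moreover the restriction F = F'|_Ω depends only on C and not on the choice of the extension C'; F is called the Ω-tropical polynomial of C. -/

import Mathlib

open Filter
open scoped Pointwise Topology

/-! ## The abelian sandpile model on a finite subset `Γ` of `ℤ²` -/

/-- Lattice sites. -/
abbrev V : Type := ℤ × ℤ

/-- The four lattice neighbours of `v`. -/
def nbrs (v : V) : Finset V :=
  {(v.1 + 1, v.2), (v.1 - 1, v.2), (v.1, v.2 + 1), (v.1, v.2 - 1)}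

/-- A sandpile state on `Γ`: a nonnegative integer valued function, regarded as a
function on all of `ℤ²` vanishing outside `Γ`. -/
def IsState (Γ : Set V) (φ : V → ℤ) : Prop :=
  (∀ v, 0 ≤ φ v) ∧ ∀ v ∉ Γ, φ v = 0

open Classical in
/-- The toppling operator at `v ∈ Γ`: `T_v φ = φ - 4δ_v + ∑_{w ∈ n(v) ∩ Γ} δ_w`. -/
noncomputable def toppleAt (Γ : Set V) (v : V) (φ : V → ℤ) : V → ℤ :=
  fun w => φ w - (if w = v then 4 else 0) + (if w ∈ nbrs v ∧ w ∈ Γ then 1 else 0)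

/-- A state is stable if it is at most `3` everywhere on `Γ`. -/
def StableState (Γ : Set V) (φ : V → ℤ) : Prop := ∀ v ∈ Γ, φ v ≤ 3

/-- One legal toppling step: topple some `v ∈ Γ` with `φ v ≥ 4`. -/
def LegalStep (Γ : Set V) (φ ψ : V → ℤ) : Prop :=
  ∃ v ∈ Γ, 4 ≤ φ v ∧ ψ = toppleAt Γ v φ

/-- `ρ 0, ρ 1, …, ρ m` is a relaxation of `φ`: a sequence of legal topplings
ending in a stable state. -/
def IsRelaxation (Γ : Set V) (φ : V → ℤ) (m : ℕ) (ρ : ℕ → V → ℤ) : Prop :=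
  ρ 0 = φ ∧ (∀ i < m, LegalStep Γ (ρ i) (ρ (i + 1))) ∧ StableState Γ (ρ m)

/-- `ψ` is the result of some relaxation of `φ`. -/
def Relaxes (Γ : Set V) (φ ψ : V → ℤ) : Prop :=
  ∃ m ρ, IsRelaxation Γ φ m ρ ∧ ρ m = ψ

/-! ## Geometry: lattice polygons, scaled lattice sets, deviation sets -/

/-- The embedding of the lattice `ℤ²` into the plane `ℝ²`. -/
def toR (v : ℤ × ℤ) : ℝ × ℝ := ((v.1 : ℝ), (v.2 : ℝ))

/-- `Ω` is a non-degenerate convex lattice polygon: the convex hull of a finite set of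
lattice points, with nonempty interior. -/
def IsLatticePolygon (Ω : Set (ℝ × ℝ)) : Prop :=
  (∃ S : Finset (ℤ × ℤ), Ω = convexHull ℝ (toR '' ↑S)) ∧ (interior Ω).Nonempty

/-- `Γ_N = (NΩ) ∩ ℤ²`. -/
def latGrid (Ω : Set (ℝ × ℝ)) (N : ℕ) : Set V := {v : V | toR v ∈ (N : ℝ) • Ω}

/-- Coordinate-wise floor `[Np] ∈ ℤ²` of the rescaled point `Np`, `p ∈ ℝ²`. -/
noncomputable def flr (N : ℕ) (p : ℝ × ℝ) : V := (⌊(N : ℝ) * p.1⌋, ⌊(N : ℝ) * p.2⌋)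

open Classical in
/-- The perturbed maximal state `3 + ∑_{p ∈ P} δ_{[Np]}` on `Γ_N` (as a function on `ℤ²`
vanishing outside `Γ_N`). -/
noncomputable def stateN (Ω : Set (ℝ × ℝ)) (P : Finset (ℝ × ℝ)) (N : ℕ) : V → ℤ :=
  fun v => if v ∈ latGrid Ω N then 3 + ∑ p ∈ P, (if v = flr N p then 1 else 0) else 0

/-- The scaled deviation set `C_N = (1/N)·{v ∈ Γ_N : ψ v < 3}` of a state `ψ` on `Γ_N`. -/
def devSet (Ω : Set (ℝ × ℝ)) (N : ℕ) (ψ : V → ℤ) : Set (ℝ × ℝ) :=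
  {x | ∃ v ∈ latGrid Ω N, ψ v < 3 ∧ x = ((v.1 : ℝ) / N, (v.2 : ℝ) / N)}

/-- `l ∈ ℤ²` is the primitive integer vector of the direction `d ∈ ℝ²`:
its coordinates are coprime and `d` is a positive multiple of `l`. -/
def PrimOut (d : ℝ × ℝ) (l : ℤ × ℤ) : Prop :=
  Int.gcd l.1 l.2 = 1 ∧ ∃ t : ℝ, 0 < t ∧ d = t • toR l

/-- `d ∈ ℝ²` has rational slope (it is a positive multiple of an integer vector). -/
def RatDir (d : ℝ × ℝ) : Prop := ∃ l, PrimOut d l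

open Classical in
/-- The primitive integer vector of a direction `d` with rational slope
(junk value `0` otherwise). -/
noncomputable def prim (d : ℝ × ℝ) : ℤ × ℤ :=
  if h : ∃ l, PrimOut d l then h.choose else 0

/-- An edge (straight closed segment) recorded by its two endpoints. -/
abbrev Seg : Type := (ℝ × ℝ) × (ℝ × ℝ)

/-- The closed segment of an edge. -/
def seg (e : Seg) : Set (ℝ × ℝ) := segment ℝ e.1 e.2

/-! ## Ω-tropical curves -/

/-- A valid edge set: no degenerate edges and each edge recorded in one orientation only. -/
def EdgeSet (E : Finset Seg) : Prop := ∀ e ∈ E, e.1 ≠ e.2 ∧ (e.2, e.1) ∉ E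

/-- Edges meet only at common endpoints. -/
def Planar (E : Finset Seg) : Prop :=
  ∀ e ∈ E, ∀ e' ∈ E, e ≠ e' →
    seg e ∩ seg e' ⊆ ({e.1, e.2} : Set (ℝ × ℝ)) ∩ {e'.1, e'.2}

/-- The support of the graph: the union of its closed edges. -/
def gsupp (E : Finset Seg) : Set (ℝ × ℝ) := ⋃ e ∈ E, seg e

/-- `v` is a vertex of the graph `E`. -/
def IsVert (E : Finset Seg) (v : ℝ × ℝ) : Prop := ∃ e ∈ E, e.1 = v ∨ e.2 = v

/-- The primitive integer vector of the edge `e`, oriented out of its endpoint `v`. -/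
noncomputable def outDir (v : ℝ × ℝ) (e : Seg) : ℤ × ℤ :=
  if e.1 = v then prim (e.2 - e.1) else prim (e.1 - e.2)

open Classical in
/-- The balancing sum `∑_{e ∈ E_v} m_e l_e` at `v`, over edges incident to `v`, with
`l_e` oriented out of `v`. -/
noncomputable def balSum (E : Finset Seg) (m : Seg → ℕ) (v : ℝ × ℝ) : ℤ × ℤ :=
  ∑ e ∈ E.filter (fun e => e.1 = v ∨ e.2 = v), (m e : ℤ) • outDir v e

/-- The segment `[a, b]` is a side of the polygon `Ω`: its endpoints are distinct
vertices (extreme points) of `Ω` and it lies in the boundary of `Ω`. -/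
def IsSide (Ω : Set (ℝ × ℝ)) (a b : ℝ × ℝ) : Prop :=
  a ≠ b ∧ a ∈ Set.extremePoints ℝ Ω ∧ b ∈ Set.extremePoints ℝ Ω ∧
    segment ℝ a b ⊆ frontier Ω

/-- A labeling of the sides of `Ω` by positive integers (independent of orientation). -/
def SideLabel (Ω : Set (ℝ × ℝ)) (d : Seg → ℤ) : Prop :=
  ∀ a b : ℝ × ℝ, IsSide Ω a b → 0 < d (a, b) ∧ d (a, b) = d (b, a)

/-- The outer balancing equations: at every vertex `v` of `Ω` with incident sides
`s₁ = [v,a]`, `s₂ = [v,b]`, one has `∑_{e ∈ E_v} m_e l_e = d_{s₁} l_{s₁} + d_{s₂} l_{s₂}`. -/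
def OuterBalEq (Ω : Set (ℝ × ℝ)) (E : Finset Seg) (m : Seg → ℕ) (d : Seg → ℤ) : Prop :=
  ∀ v ∈ Set.extremePoints ℝ Ω, ∀ a b : ℝ × ℝ, a ≠ b →
    IsSide Ω v a → IsSide Ω v b →
      balSum E m v = d (v, a) • prim (a - v) + d (v, b) • prim (b - v)

/-- `(E, m)` is an `Ω`-tropical curve: a finite weighted planar graph contained in `Ω`
whose edges have rational slopes and positive integer weights, meeting `∂Ω` exactly in
the vertices of `Ω`, balanced at every vertex interior to `Ω`, and satisfying the outer
balancing condition at the vertices of `Ω` for a unique positive labeling of the sides. -/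
def OmegaTropCurve (Ω : Set (ℝ × ℝ)) (E : Finset Seg) (m : Seg → ℕ) : Prop :=
  EdgeSet E ∧ Planar E ∧ (∀ e ∈ E, 0 < m e) ∧ (∀ e ∈ E, RatDir (e.2 - e.1)) ∧
  gsupp E ⊆ Ω ∧
  gsupp E ∩ frontier Ω = Set.extremePoints ℝ Ω ∧
  (∀ v : ℝ × ℝ, IsVert E v → v ∈ interior Ω → balSum E m v = 0) ∧
  ∃ d : Seg → ℤ, SideLabel Ω d ∧ OuterBalEq Ω E m d ∧
    ∀ d' : Seg → ℤ, SideLabel Ω d' → OuterBalEq Ω E m d' →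
      ∀ a b : ℝ × ℝ, IsSide Ω a b → d' (a, b) = d (a, b)

/-! ## Plane tropical curves -/

/-- Combinatorial data of a plane tropical curve: finitely many bounded edges (segments)
and unbounded edges (rays, given by a base point and a primitive integer direction),
with positive integer weights. -/
structure PlaneTropData where
  segs : Finset Seg
  rays : Finset ((ℝ × ℝ) × (ℤ × ℤ))
  msegs : Seg → ℕ
  mrays : (ℝ × ℝ) × (ℤ × ℤ) → ℕ

/-- The closed ray from `r.1` in the direction `r.2`. -/
def raySet (r : (ℝ × ℝ) × (ℤ × ℤ)) : Set (ℝ × ℝ) :=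
  {x | ∃ t : ℝ, 0 ≤ t ∧ x = r.1 + t • toR r.2}

/-- The support of a plane tropical curve. -/
def ptcSupp (C : PlaneTropData) : Set (ℝ × ℝ) :=
  (⋃ e ∈ C.segs, seg e) ∪ ⋃ r ∈ C.rays, raySet r

/-- `v` is a vertex of the plane tropical curve. -/
def ptcVert (C : PlaneTropData) (v : ℝ × ℝ) : Prop :=
  (∃ e ∈ C.segs, e.1 = v ∨ e.2 = v) ∨ ∃ r ∈ C.rays, r.1 = v

open Classical in
/-- The balancing sum at `v`: incident bounded edges and rays emanating from `v`,
with multiplicities, all oriented out of `v`. -/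
noncomputable def ptcBalSum (C : PlaneTropData) (v : ℝ × ℝ) : ℤ × ℤ :=
  balSum C.segs C.msegs v +
    ∑ r ∈ C.rays.filter (fun r => r.1 = v), (C.mrays r : ℤ) • r.2

/-- `C` is a plane tropical curve: a planar graph in `ℝ²` with finitely many edges
(possibly unbounded) of rational slope and positive integer weight, satisfying the
balancing condition at every vertex. -/
def IsPlaneTropCurve (C : PlaneTropData) : Prop :=
  EdgeSet C.segs ∧
  (∀ e ∈ C.segs, 0 < C.msegs e ∧ RatDir (e.2 - e.1)) ∧
  (∀ r ∈ C.rays, 0 < C.mrays r ∧ Int.gcd r.2.1 r.2.2 = 1) ∧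
  (∀ e ∈ C.segs, ∀ e' ∈ C.segs, e ≠ e' →
    seg e ∩ seg e' ⊆ ({e.1, e.2} : Set (ℝ × ℝ)) ∩ {e'.1, e'.2}) ∧
  (∀ e ∈ C.segs, ∀ r ∈ C.rays,
    seg e ∩ raySet r ⊆ ({e.1, e.2} : Set (ℝ × ℝ)) ∩ {r.1}) ∧
  (∀ r ∈ C.rays, ∀ r' ∈ C.rays, r ≠ r' →
    raySet r ∩ raySet r' ⊆ ({r.1} : Set (ℝ × ℝ)) ∩ {r'.1}) ∧
  ∀ v : ℝ × ℝ, ptcVert C v → ptcBalSum C v = 0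

/-- The plane tropical curve `C'` extends the `Ω`-tropical curve `(E, m)`, i.e.
`C = C' ∩ Ω` as weighted graphs: the support of `C'` meets `Ω` exactly in the support
of `E`, and every edge of `E` lies in an edge of `C'` of the same weight. -/
def ExtendsCurve (Ω : Set (ℝ × ℝ)) (E : Finset Seg) (m : Seg → ℕ)
    (C : PlaneTropData) : Prop :=
  IsPlaneTropCurve C ∧ ptcSupp C ∩ Ω = gsupp E ∧
  ∀ e ∈ E, (∃ e' ∈ C.segs, seg e ⊆ seg e' ∧ C.msegs e' = m e) ∨
    (∃ r ∈ C.rays, seg e ⊆ raySet r ∧ C.mrays r = m e)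

/-! ## Tropical polynomials and corner loci -/

/-- A tropical polynomial: `F(x) = min_{(k,l) ∈ A} (k x₁ + l x₂ + a_{k,l})` for a finite
nonempty `A ⊆ ℤ²` and reals `a_{k,l}`. -/
def IsTropPoly (F : ℝ × ℝ → ℝ) : Prop :=
  ∃ (A : Finset (ℤ × ℤ)) (hA : A.Nonempty) (a : ℤ × ℤ → ℝ),
    ∀ x : ℝ × ℝ,
      F x = A.inf' hA fun kl => (kl.1 : ℝ) * x.1 + (kl.2 : ℝ) * x.2 + a kl

/-- `F` is affine in a neighbourhood of `x`. -/
def LocallyAffine (F : ℝ × ℝ → ℝ) (x : ℝ × ℝ) : Prop :=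
  ∃ U ∈ nhds x, ∃ c₁ c₂ c₀ : ℝ, ∀ y ∈ U, F y = c₁ * y.1 + c₂ * y.2 + c₀

/-- The corner locus of `F`: the points where `F` is not locally affine. -/
def cornerLocus (F : ℝ × ℝ → ℝ) : Set (ℝ × ℝ) := {x | ¬ LocallyAffine F x}

/-- Near the point `x`, lying in the relative interior of an edge with primitive
direction `l`, the function `F` is the minimum of two affine functions whose gradients
differ by `m` times the rotated vector `l^⊥ = (-l₂, l₁)`; this characterizes the
canonical weight `m` of the corner locus of `F` along this edge. -/
def EdgeWeightIs (F : ℝ × ℝ → ℝ) (x : ℝ × ℝ) (l : ℤ × ℤ) (m : ℕ) : Prop :=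
  ∃ U ∈ nhds x, ∃ g₁ g₂ : ℝ × ℝ, ∃ c₁ c₂ : ℝ,
    g₁ - g₂ = (m : ℝ) • toR (-l.2, l.1) ∧
    ∀ y ∈ U, F y = min (g₁.1 * y.1 + g₁.2 * y.2 + c₁) (g₂.1 * y.1 + g₂.2 * y.2 + c₂)

/-- The corner locus of `F`, with its canonical weights, is the plane tropical
curve `C`. -/
def RepresentsCornerLocus (F : ℝ × ℝ → ℝ) (C : PlaneTropData) : Prop :=
  ptcSupp C = cornerLocus F ∧
  (∀ e ∈ C.segs, ∀ x ∈ seg e, x ≠ e.1 → x ≠ e.2 →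
    EdgeWeightIs F x (prim (e.2 - e.1)) (C.msegs e)) ∧
  (∀ r ∈ C.rays, ∀ x ∈ raySet r, x ≠ r.1 →
    EdgeWeightIs F x r.2 (C.mrays r))

/-- `F` is the `Ω`-tropical polynomial of the `Ω`-tropical curve `(E, m)`: the
restriction to `Ω` of a tropical polynomial vanishing on `∂Ω` whose corner locus is a
plane tropical curve extending `(E, m)`.  (Values of `F` outside `Ω` are irrelevant.) -/
def IsOmegaPolyOf (Ω : Set (ℝ × ℝ)) (E : Finset Seg) (m : Seg → ℕ)
    (F : ℝ × ℝ → ℝ) : Prop :=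
  ∃ (F' : ℝ × ℝ → ℝ) (C : PlaneTropData),
    ExtendsCurve Ω E m C ∧ IsTropPoly F' ∧ (∀ x ∈ frontier Ω, F' x = 0) ∧
    RepresentsCornerLocus F' C ∧ ∀ x ∈ Ω, F x = F' x


/-! ## Part 1: the elementary charge function -/

/-- The determinant of `l` and `x`. -/
noncomputable def dt (l : ℤ × ℤ) (x : ℝ × ℝ) : ℝ := (l.1 : ℝ) * x.2 - (l.2 : ℝ) * x.1

/-- A potential whose only kink is the ray of direction `l`, up to a jump on the positive
horizontal axis which is linear in `l`. -/
noncomputable def rho (l : ℤ × ℤ) (y : ℝ × ℝ) : ℝ :=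
  if 0 < l.2 ∨ (l.2 = 0 ∧ 0 < l.1) then (if 0 ≤ y.2 then min 0 (dt l y) else 0)
  else (if 0 ≤ y.2 then dt l y else min 0 (dt l y))

/-- `w` lies on the open ray of direction `l`. -/
def onRay (l : ℤ × ℤ) (w : ℝ × ℝ) : Prop := ∃ t : ℝ, 0 < t ∧ w = t • toR l

open Classical in
/-- The jump of `rho`. -/
noncomputable def jmp (w y : ℝ × ℝ) : ℝ := if w.2 = 0 ∧ 0 < w.1 ∧ 0 ≤ y.2 then 1 else 0

lemma dt_cont (l : ℤ × ℤ) : Continuous (dt l) := by unfold dt; fun_prop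

lemma onRay_dt {l : ℤ × ℤ} {w : ℝ × ℝ} (h : onRay l w) : dt l w = 0 := by
  obtain ⟨t, ht, rfl⟩ := h
  simp [dt, toR]; ring

lemma rho_abs (l : ℤ × ℤ) (y : ℝ × ℝ) : |rho l y| ≤ |dt l y| := by
  have : |min 0 (dt l y)| ≤ |dt l y| := by
    rcases le_total 0 (dt l y) with h | h
    · simp [min_eq_left h]
    · simp [min_eq_right h]
  unfold rho
  split_ifs <;> simp [this]

lemma onRay_upper {l : ℤ × ℤ} {w : ℝ × ℝ} (h : onRay l w) (hl : 0 < l.2) : 0 < w.2 := by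
  obtain ⟨t, ht, rfl⟩ := h
  have : (0 : ℝ) < l.2 := by exact_mod_cast hl
  simp [toR]; positivity

lemma onRay_lower {l : ℤ × ℤ} {w : ℝ × ℝ} (h : onRay l w) (hl : l.2 < 0) : w.2 < 0 := by
  obtain ⟨t, ht, rfl⟩ := h
  have : (l.2 : ℝ) < 0 := by exact_mod_cast hl
  simp [toR]; nlinarith

lemma onRay_right {l : ℤ × ℤ} {w : ℝ × ℝ} (h : onRay l w) (hl : 0 < l.1) : 0 < w.1 := by
  obtain ⟨t, ht, rfl⟩ := h
  have : (0 : ℝ) < l.1 := by exact_mod_cast hl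
  simp [toR]; positivity

lemma onRay_left {l : ℤ × ℤ} {w : ℝ × ℝ} (h : onRay l w) (hl : l.1 < 0) : w.1 < 0 := by
  obtain ⟨t, ht, rfl⟩ := h
  have : (l.1 : ℝ) < 0 := by exact_mod_cast hl
  simp [toR]; nlinarith

lemma onRay_flat {l : ℤ × ℤ} {w : ℝ × ℝ} (h : onRay l w) (hl : l.2 = 0) : w.2 = 0 := by
  obtain ⟨t, ht, rfl⟩ := h
  simp [toR, hl]

lemma onRay_of_up {l : ℤ × ℤ} {w : ℝ × ℝ} (hd : dt l w = 0) (h : 0 < (l.2 : ℝ) * w.2) :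
    onRay l w := by
  have h2 : (l.2 : ℝ) ≠ 0 := by intro h'; simp [h'] at h
  refine ⟨w.2 / l.2, ?_, ?_⟩
  · have := div_pos h (by positivity : 0 < (l.2 : ℝ) ^ 2)
    have e : (l.2 : ℝ) * w.2 / (l.2 : ℝ) ^ 2 = w.2 / l.2 := by field_simp
    rwa [e] at this
  · unfold dt at hd
    ext
    · simp [toR]; field_simp; linarith
    · simp [toR]; field_simp

lemma onRay_of_flat {l : ℤ × ℤ} {w : ℝ × ℝ} (hl : l.2 = 0) (hw : w.2 = 0)
    (h : 0 < (l.1 : ℝ) * w.1) : onRay l w := by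
  have h2 : (l.1 : ℝ) ≠ 0 := by intro h'; simp [h'] at h
  refine ⟨w.1 / l.1, ?_, ?_⟩
  · have := div_pos h (by positivity : 0 < (l.1 : ℝ) ^ 2)
    have e : (l.1 : ℝ) * w.1 / (l.1 : ℝ) ^ 2 = w.1 / l.1 := by field_simp
    rwa [e] at this
  · ext
    · simp [toR]; field_simp
    · simp [toR, hl, hw]

lemma ev_dt_pos {l : ℤ × ℤ} {w : ℝ × ℝ} (h : 0 < dt l w) : ∀ᶠ y in 𝓝 w, 0 < dt l y :=
  (dt_cont l).continuousAt.eventually (lt_mem_nhds h)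

lemma ev_dt_neg {l : ℤ × ℤ} {w : ℝ × ℝ} (h : dt l w < 0) : ∀ᶠ y in 𝓝 w, dt l y < 0 :=
  (dt_cont l).continuousAt.eventually (gt_mem_nhds h)

open Classical in
lemma rho_local (l : ℤ × ℤ) (hl : l ≠ 0) (w : ℝ × ℝ) (hw : w ≠ 0) :
    ∃ c : ℤ, |c| ≤ 1 ∧ ∀ᶠ y in 𝓝 w, rho l y = jmp w y * dt l y + c * dt l y +
      (if onRay l w then min 0 (dt l y) else 0) := by
  -- reduce to choosing which case for min
  have hmin : ∃ c : ℤ, |c| ≤ 1 ∧ ∀ᶠ y in 𝓝 w, min 0 (dt l y) = c * dt l y +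
      (if dt l w = 0 then min 0 (dt l y) else 0) := by
    rcases lt_trichotomy (dt l w) 0 with h | h | h
    · refine ⟨1, by simp, ?_⟩
      filter_upwards [ev_dt_neg h] with y hy
      simp [h.ne, min_eq_right hy.le]
    · exact ⟨0, by simp, by simp [h]⟩
    · refine ⟨0, by simp, ?_⟩
      filter_upwards [ev_dt_pos h] with y hy
      simp [h.ne', min_eq_left hy.le]
  have hsnd : Continuous (fun y : ℝ × ℝ => y.2) := continuous_snd
  by_cases hu : 0 < l.2 ∨ (l.2 = 0 ∧ 0 < l.1)
  · rcases lt_trichotomy w.2 0 with h | h | h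
    · -- below
      have hn : ¬ onRay l w := by
        intro hr
        rcases hu with hu | hu
        · linarith [onRay_upper hr hu]
        · linarith [onRay_flat hr hu.1]
      refine ⟨0, by simp, ?_⟩
      filter_upwards [hsnd.continuousAt.eventually (gt_mem_nhds h)] with y hy
      simp [rho, hu, hn, jmp, h.ne, not_le.2 hy]
    · have hw1 : w.1 ≠ 0 := by
        intro h'; exact hw (Prod.ext h' h)
      rcases hw1.lt_or_gt with h1 | h1
      · have hn : ¬ onRay l w := by
          intro hr
          rcases hu with hu | hu
          · linarith [onRay_upper hr hu]
          · linarith [onRay_right hr hu.2]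
        rcases hu with hq | hq
        · have hd : 0 < dt l w := by
            have : (0 : ℝ) < l.2 := by exact_mod_cast hq
            unfold dt; rw [h]; nlinarith
          refine ⟨0, by simp, ?_⟩
          filter_upwards [ev_dt_pos hd] with y hy
          simp [rho, hq, hn, jmp, h, not_lt.2 h1.le, min_eq_left hy.le]
        · refine ⟨0, by simp, ?_⟩
          refine Eventually.of_forall fun y => ?_
          have hp : (0 : ℝ) < l.1 := by exact_mod_cast hq.2
          simp only [rho, hq, hn, jmp, h, not_lt.2 h1.le]
          simp
          intro hy
          simp [dt, hq.1]; positivity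
      · rcases hu with hq | hq
        · have hn : ¬ onRay l w := by
            intro hr
            linarith [onRay_upper hr hq]
          have hd : dt l w < 0 := by
            have : (0 : ℝ) < l.2 := by exact_mod_cast hq
            unfold dt; rw [h]; nlinarith
          refine ⟨0, by simp, ?_⟩
          filter_upwards [ev_dt_neg hd] with y hy
          by_cases hy2 : 0 ≤ y.2
          · simp [rho, hq, hn, jmp, h, h1, hy2, min_eq_right hy.le]
          · simp [rho, hq, hn, jmp, h, h1, hy2]
        · have hp : (0 : ℝ) < l.1 := by exact_mod_cast hq.2
          have hr : onRay l w := onRay_of_flat hq.1 h (by positivity)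
          refine ⟨-1, by simp, ?_⟩
          refine Eventually.of_forall fun y => ?_
          by_cases hy2 : 0 ≤ y.2
          · have : 0 ≤ dt l y := by simp [dt, hq.1]; positivity
            simp [rho, hq, hr, jmp, h, h1, hy2, min_eq_left this]
          · have : dt l y ≤ 0 := by simp [dt, hq.1]; nlinarith
            simp [rho, hq, hr, jmp, h, h1, hy2, min_eq_right this]
    · obtain ⟨c, hc, hmin⟩ := hmin
      refine ⟨c, hc, ?_⟩
      have hiff : onRay l w ↔ dt l w = 0 := by
        refine ⟨onRay_dt, fun hd => ?_⟩
        rcases hu with hq | hq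
        · have : (0 : ℝ) < l.2 := by exact_mod_cast hq
          exact onRay_of_up hd (by positivity)
        · have hp : (0 : ℝ) < l.1 := by exact_mod_cast hq.2
          simp [dt, hq.1] at hd
          rcases hd with hd | hd
          · rw [hd] at hq; simp at hq
          · linarith
      filter_upwards [hmin, hsnd.continuousAt.eventually (lt_mem_nhds h)] with y hy hy2
      simp only [rho, hu, if_true, hy2.le, jmp, h.ne', hiff]
      simpa using hy
  · have hu' : l.2 < 0 ∨ (l.2 = 0 ∧ l.1 < 0) := by
      have : ¬ (l.1 = 0 ∧ l.2 = 0) := fun h => hl (Prod.ext h.1 h.2)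
      omega
    rcases lt_trichotomy w.2 0 with h | h | h
    · obtain ⟨c, hc, hmin⟩ := hmin
      refine ⟨c, hc, ?_⟩
      have hiff : onRay l w ↔ dt l w = 0 := by
        refine ⟨onRay_dt, fun hd => ?_⟩
        rcases hu' with hq | hq
        · have : (l.2 : ℝ) < 0 := by exact_mod_cast hq
          exact onRay_of_up hd (mul_pos_of_neg_of_neg this h)
        · have hp : (l.1 : ℝ) < 0 := by exact_mod_cast hq.2
          simp [dt, hq.1] at hd
          rcases hd with hd | hd
          · rw [hd] at hq; simp at hq
          · linarith
      filter_upwards [hmin, hsnd.continuousAt.eventually (gt_mem_nhds h)] with y hy hy2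
      simp only [rho, hu, if_false, not_le.2 hy2, jmp, h.ne, hiff]
      simpa using hy
    · have hw1 : w.1 ≠ 0 := by
        intro h'; exact hw (Prod.ext h' h)
      rcases hw1.lt_or_gt with h1 | h1
      · rcases hu' with hq | hq
        · have hn : ¬ onRay l w := by
            intro hr
            linarith [onRay_lower hr hq]
          have hd : dt l w < 0 := by
            have : (l.2 : ℝ) < 0 := by exact_mod_cast hq
            unfold dt; rw [h]; nlinarith
          refine ⟨1, by simp, ?_⟩
          filter_upwards [ev_dt_neg hd] with y hy
          simp only [rho, hu, hn, jmp, h, not_lt.2 h1.le, min_eq_right hy.le]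
          simp
        · have hp : (l.1 : ℝ) < 0 := by exact_mod_cast hq.2
          have hr : onRay l w := onRay_of_flat hq.1 h (mul_pos_of_neg_of_neg hp h1)
          refine ⟨0, by simp, ?_⟩
          refine Eventually.of_forall fun y => ?_
          by_cases hy2 : 0 ≤ y.2
          · have : dt l y ≤ 0 := by simp [dt, hq.1]; nlinarith
            simp only [rho, hu, hr, jmp, h, not_lt.2 h1.le, hy2, min_eq_right this]
            simp
          · simp only [rho, hu, hr, jmp, h, not_lt.2 h1.le, hy2]
            simp
      · have hn : ¬ onRay l w := by
          intro hr
          rcases hu' with hu | hu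
          · linarith [onRay_lower hr hu]
          · linarith [onRay_left hr hu.2]
        refine ⟨0, by simp, ?_⟩
        rcases hu' with hq | hq
        · have hd : 0 < dt l w := by
            have : (l.2 : ℝ) < 0 := by exact_mod_cast hq
            unfold dt; rw [h]; nlinarith
          filter_upwards [ev_dt_pos hd] with y hy
          simp only [rho, hu, hn, jmp, h, h1, min_eq_left hy.le]
          simp
        · refine Eventually.of_forall fun y => ?_
          have hp : (l.1 : ℝ) < 0 := by exact_mod_cast hq.2
          by_cases hy2 : 0 ≤ y.2
          · simp only [rho, hu, hn, jmp, h, h1, hy2]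
            simp
          · have : 0 ≤ dt l y := by simp [dt, hq.1]; nlinarith
            simp only [rho, hu, hn, jmp, h, h1, hy2, min_eq_left this]
            simp
    · have hn : ¬ onRay l w := by
        intro hr
        rcases hu' with hu | hu
        · linarith [onRay_lower hr hu]
        · linarith [onRay_flat hr hu.1]
      refine ⟨1, by simp, ?_⟩
      filter_upwards [hsnd.continuousAt.eventually (lt_mem_nhds h)] with y hy
      simp only [rho, hu, hn, jmp, h.ne', hy.le]
      simp

/-! ## Part 2: balanced systems of charges -/

/-- The potential of a system of charges. -/
noncomputable def chF {ι : Type} [Fintype ι] (v : ι → ℝ × ℝ) (l : ι → ℤ × ℤ) (n : ι → ℤ)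
    (x : ℝ × ℝ) : ℝ := ∑ i, (n i : ℝ) * rho (l i) (x - v i)

open Classical in
/-- Balanced systems of charges. -/
def chBal {ι : Type} [Fintype ι] (v : ι → ℝ × ℝ) (l : ι → ℤ × ℤ) (n : ι → ℤ) : Prop :=
  ∀ p : ℝ × ℝ, ∑ i, (if v i = p then n i • l i else 0) = 0

lemma dt_add (l l' : ℤ × ℤ) (x : ℝ × ℝ) : dt (l + l') x = dt l x + dt l' x := by
  simp [dt]; ring

lemma dt_neg (l : ℤ × ℤ) (x : ℝ × ℝ) : dt (-l) x = - dt l x := by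
  simp [dt]; ring

lemma dt_zero (x : ℝ × ℝ) : dt 0 x = 0 := by simp [dt]

lemma dt_smul (n : ℤ) (l : ℤ × ℤ) (x : ℝ × ℝ) : dt (n • l) x = n * dt l x := by
  simp [dt]; ring

lemma dt_sum {ι : Type} (s : Finset ι) (f : ι → ℤ × ℤ) (x : ℝ × ℝ) :
    dt (∑ i ∈ s, f i) x = ∑ i ∈ s, dt (f i) x := by
  classical
  induction s using Finset.induction_on with
  | empty => simp [dt_zero]
  | insert a s ha ih => rw [Finset.sum_insert ha, Finset.sum_insert ha, dt_add, ih]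

open Classical in
lemma ch_cancel {ι : Type} [Fintype ι] (v : ι → ℝ × ℝ) (l : ι → ℤ × ℤ) (n : ι → ℤ)
    (hb : chBal v l n) (G : ℝ × ℝ → ℝ) (x : ℝ × ℝ) :
    ∑ i, G (v i) * ((n i : ℝ) * dt (l i) (x - v i)) = 0 := by
  have h1 : ∀ i, G (v i) * ((n i : ℝ) * dt (l i) (x - v i)) =
      ∑ p ∈ Finset.univ.image v, G p * dt (if v i = p then n i • l i else 0) (x - p) := by
    intro i
    rw [Finset.sum_eq_single (v i)]
    · rw [if_pos rfl, dt_smul]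
    · intro p _ hp
      simp [hp.symm, dt_zero]
    · intro h; simp at h
  simp_rw [h1]
  rw [Finset.sum_comm]
  refine Finset.sum_eq_zero fun p _ => ?_
  rw [← Finset.mul_sum, ← dt_sum, hb p, dt_zero, mul_zero]

open Classical in
lemma ch_local {ι : Type} [Fintype ι] (v : ι → ℝ × ℝ) (l : ι → ℤ × ℤ) (n : ι → ℤ)
    (hb : chBal v l n) (hl : ∀ i, l i ≠ 0) (x0 : ℝ × ℝ) :
    ∃ c : ι → ℤ, (∀ i, |c i| ≤ 1) ∧ ∀ᶠ x in 𝓝 x0, chF v l n x =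
      ∑ i, (if v i = x0 then (n i : ℝ) * rho (l i) (x - v i) else
        (n i : ℝ) * (c i * dt (l i) (x - v i) +
          (if onRay (l i) (x0 - v i) then min 0 (dt (l i) (x - v i)) else 0))) := by
  have h : ∀ i, ∃ c : ℤ, |c| ≤ 1 ∧ (v i ≠ x0 → ∀ᶠ x in 𝓝 x0, rho (l i) (x - v i) =
      jmp (x0 - v i) (x - v i) * dt (l i) (x - v i) + c * dt (l i) (x - v i) +
      (if onRay (l i) (x0 - v i) then min 0 (dt (l i) (x - v i)) else 0)) := by
    intro i
    by_cases hv : v i = x0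
    · exact ⟨0, by simp, fun h => absurd hv h⟩
    · obtain ⟨c, hc, hev⟩ := rho_local (l i) (hl i) (x0 - v i)
        (sub_ne_zero.2 (fun h => hv h.symm))
      refine ⟨c, hc, fun _ => ?_⟩
      have : Tendsto (fun x => x - v i) (𝓝 x0) (𝓝 (x0 - v i)) :=
        (continuous_id.sub continuous_const).continuousAt
      exact this.eventually hev
  choose c hc hev using h
  refine ⟨c, hc, ?_⟩
  have hall : ∀ᶠ x in 𝓝 x0, ∀ i, v i ≠ x0 → rho (l i) (x - v i) =
      jmp (x0 - v i) (x - v i) * dt (l i) (x - v i) + c i * dt (l i) (x - v i) +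
      (if onRay (l i) (x0 - v i) then min 0 (dt (l i) (x - v i)) else 0) := by
    rw [eventually_all]
    intro i
    by_cases hv : v i = x0
    · simp [hv]
    · filter_upwards [hev i hv] with x hx _ using hx
  filter_upwards [hall] with x hx
  have hcan := ch_cancel v l n hb (fun p => if p = x0 then 0 else jmp (x0 - p) (x - p)) x
  rw [← sub_eq_zero]
  refine Eq.trans ?_ hcan
  rw [chF, ← Finset.sum_sub_distrib]
  refine Finset.sum_congr rfl fun i _ => ?_
  by_cases hv : v i = x0
  · simp [hv]
  · simp only [hv, if_false]
    rw [hx i hv]; ring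

lemma rho_cont_zero (l : ℤ × ℤ) : ContinuousAt (rho l) 0 := by
  have h0 : rho l 0 = 0 := by
    have := rho_abs l 0
    simpa [dt] using this
  rw [ContinuousAt, h0]
  have : Tendsto (fun y => |dt l y|) (𝓝 0) (𝓝 0) := by
    have := (dt_cont l).abs.continuousAt (x := (0 : ℝ × ℝ))
    rw [ContinuousAt] at this
    simpa [dt] using this
  exact squeeze_zero_norm (fun y => by simpa using rho_abs l y) this

lemma ch_cont {ι : Type} [Fintype ι] (v : ι → ℝ × ℝ) (l : ι → ℤ × ℤ) (n : ι → ℤ)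
    (hb : chBal v l n) (hl : ∀ i, l i ≠ 0) : Continuous (chF v l n) := by
  classical
  rw [continuous_iff_continuousAt]
  intro x0
  obtain ⟨c, hc, hev⟩ := ch_local v l n hb hl x0
  refine ContinuousAt.congr ?_ (EventuallyEq.symm hev)
  refine tendsto_finsetSum _ fun i _ => ?_
  by_cases hv : v i = x0
  · simp only [hv, if_true]
    refine ContinuousAt.mul continuousAt_const ?_
    have h := rho_cont_zero (l i)
    refine ContinuousAt.comp (g := rho (l i)) (f := fun x => x - x0) ?_ (by fun_prop)
    simpa using h
  · simp only [hv, if_false]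
    have := dt_cont (l i)
    have h2 : Continuous (fun x => (n i : ℝ) * (c i * dt (l i) (x - v i) +
          (if onRay (l i) (x0 - v i) then min 0 (dt (l i) (x - v i)) else 0))) := by
      split_ifs <;> fun_prop
    exact h2.continuousAt

open Classical in
lemma ch_bound {ι : Type} [Fintype ι] (v : ι → ℝ × ℝ) (l : ι → ℤ × ℤ) (n : ι → ℤ)
    (hb : chBal v l n) (hl : ∀ i, l i ≠ 0) :
    ∃ M : ℤ, ∀ x0, (∀ i, v i ≠ x0) → ∃ g : ℤ × ℤ, |g.1| ≤ M ∧ |g.2| ≤ M ∧ ∃ c : ℝ,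
      ∀ᶠ x in 𝓝 x0, chF v l n x = g.1 * x.1 + g.2 * x.2 + c +
        ∑ i, (n i : ℝ) *
          (if onRay (l i) (x0 - v i) then min 0 (dt (l i) (x - v i)) else 0) := by
  refine ⟨∑ i, |n i| * (|(l i).1| + |(l i).2|), fun x0 hx0 => ?_⟩
  obtain ⟨c, hc, hev⟩ := ch_local v l n hb hl x0
  refine ⟨(∑ i, n i * c i * (-(l i).2), ∑ i, n i * c i * (l i).1), ?_, ?_,
    ∑ i, -((n i : ℝ) * c i * dt (l i) (v i)), ?_⟩
  · refine (Finset.abs_sum_le_sum_abs _ _).trans (Finset.sum_le_sum fun i _ => ?_)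
    rw [abs_mul, abs_mul, abs_neg, mul_assoc]
    refine mul_le_mul_of_nonneg_left ?_ (abs_nonneg _)
    nlinarith [hc i, abs_nonneg (l i).1, abs_nonneg (l i).2]
  · refine (Finset.abs_sum_le_sum_abs _ _).trans (Finset.sum_le_sum fun i _ => ?_)
    rw [abs_mul, abs_mul, mul_assoc]
    refine mul_le_mul_of_nonneg_left ?_ (abs_nonneg _)
    nlinarith [hc i, abs_nonneg (l i).1, abs_nonneg (l i).2]
  · filter_upwards [hev] with x hx
    rw [hx]
    push_cast
    rw [Finset.sum_mul, Finset.sum_mul, ← Finset.sum_add_distrib, ← Finset.sum_add_distrib,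
      ← Finset.sum_add_distrib]
    refine Finset.sum_congr rfl fun i _ => ?_
    simp only [hx0 i, if_false, mul_add]
    congr 1
    simp [dt]; ring

/-! ## Part 3: local concavity, affine functions and tropical polynomials -/

lemma oneD (g : ℝ → ℝ) (hg : ContinuousOn g (Set.Icc 0 1))
    (h : ∀ t ∈ Set.Ioo (0 : ℝ) 1, ∃ δ0 > 0, ∀ δ, 0 < δ → δ < δ0 →
      g (t + δ) + g (t - δ) ≤ 2 * g t) :
    ∀ t ∈ Set.Icc (0 : ℝ) 1, (1 - t) * g 0 + t * g 1 ≤ g t := by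
  set k : ℝ → ℝ := fun t => g t - (1 - t) * g 0 - t * g 1 with hk
  have hkc : ContinuousOn k (Set.Icc 0 1) := by
    rw [hk]; fun_prop
  obtain ⟨t1, ht1, hmin⟩ := isCompact_Icc.exists_isMinOn (Set.nonempty_Icc.2 zero_le_one) hkc
  have hmin' : ∀ t ∈ Set.Icc (0 : ℝ) 1, k t1 ≤ k t := fun t ht => hmin ht
  suffices h0 : 0 ≤ k t1 by
    intro t ht
    have := hmin' t ht
    simp only [hk] at this h0
    linarith
  by_contra hneg
  push Not at hneg
  have hZ : IsClosed (Set.Icc (0 : ℝ) 1 ∩ k ⁻¹' {k t1}) :=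
    hkc.preimage_isClosed_of_isClosed isClosed_Icc isClosed_singleton
  have hZc : IsCompact (Set.Icc (0 : ℝ) 1 ∩ k ⁻¹' {k t1}) :=
    isCompact_Icc.of_isClosed_subset hZ Set.inter_subset_left
  obtain ⟨t0, ⟨ht0, hkt0⟩, hgr⟩ := hZc.exists_isGreatest ⟨t1, ht1, rfl⟩
  have hkt0' : k t0 = k t1 := hkt0
  have hpos : 0 < t0 := by
    rcases ht0.1.eq_or_lt with h' | h'
    · exfalso; rw [← h'] at hkt0'; simp [hk] at hkt0' hneg; linarith
    · exact h'
  have hlt : t0 < 1 := by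
    rcases ht0.2.eq_or_lt with h' | h'
    · exfalso; rw [h'] at hkt0'; simp [hk] at hkt0' hneg; linarith
    · exact h'
  obtain ⟨δ0, hδ0, hmid⟩ := h t0 ⟨hpos, hlt⟩
  obtain ⟨δ, hδ, hδ'⟩ := exists_between (lt_min hδ0 (lt_min hpos (sub_pos.2 hlt)))
  have a1 := lt_min_iff.1 hδ'
  have a2 := lt_min_iff.1 a1.2
  have m1 := hmid δ hδ a1.1
  have in1 : t0 + δ ∈ Set.Icc (0 : ℝ) 1 := ⟨by linarith, by linarith⟩
  have in2 : t0 - δ ∈ Set.Icc (0 : ℝ) 1 := ⟨by linarith, by linarith⟩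
  have b1 := hmin' _ in1
  have b2 := hmin' _ in2
  have : k (t0 + δ) = k t1 := by
    apply le_antisymm _ b1
    simp only [hk] at *
    linarith
  have := hgr ⟨in1, this⟩
  linarith

lemma ev_line {Q : ℝ × ℝ → Prop} {x0 : ℝ × ℝ} (h : ∀ᶠ x in 𝓝 x0, Q x) (v : ℝ × ℝ) :
    ∃ δ0 > 0, ∀ δ : ℝ, |δ| < δ0 → Q (x0 + δ • v) := by
  have ht : Tendsto (fun δ : ℝ => x0 + δ • v) (𝓝 0) (𝓝 x0) := by
    have : Continuous (fun δ : ℝ => x0 + δ • v) := by fun_prop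
    simpa using this.tendsto 0
  obtain ⟨δ0, h1, h2⟩ := Metric.eventually_nhds_iff.1 (ht.eventually h)
  exact ⟨δ0, h1, fun δ hδ => h2 (by simpa using hδ)⟩

lemma concave_of_local {U : Set (ℝ × ℝ)} (hU : IsOpen U) (hUc : Convex ℝ U)
    {P : Set (ℝ × ℝ)} (hP : P.Finite) {F : ℝ × ℝ → ℝ} (hF : ContinuousOn F U)
    (h : ∀ x ∈ U, x ∉ P → ∀ v : ℝ × ℝ, ∃ δ0 > 0, ∀ δ : ℝ, 0 < δ → δ < δ0 →
      F (x + δ • v) + F (x - δ • v) ≤ 2 * F x) : ConcaveOn ℝ U F := by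
  refine ⟨hUc, fun x hx y hy a b ha hb hab => ?_⟩
  by_cases hxy : x = y
  · subst hxy
    rw [← add_smul, ← add_smul, hab, one_smul, one_smul]
  set n : ℝ × ℝ := (-(y - x).2, (y - x).1) with hn
  set N : ℝ := n.1 ^ 2 + n.2 ^ 2 with hN
  have hNpos : 0 < N := by
    by_contra hcon
    apply hxy
    have h1 : n.1 = 0 := by nlinarith [sq_nonneg n.1, sq_nonneg n.2]
    have h2 : n.2 = 0 := by nlinarith [sq_nonneg n.1, sq_nonneg n.2]
    simp [hn] at h1 h2
    ext <;> linarith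
  set B : Set ℝ := (fun p : ℝ × ℝ => ((p.1 - x.1) * n.1 + (p.2 - x.2) * n.2) / N) '' P with hB
  have hBf : B.Finite := hP.image _
  have hev1 : ∀ᶠ s : ℝ in 𝓝[≠] 0, s ∉ B := by
    have h1 : ∀ᶠ s : ℝ in 𝓝 0, s ∉ B \ {0} :=
      (hBf.subset Set.sdiff_subset).isClosed.isOpen_compl.mem_nhds (by simp)
    filter_upwards [h1.filter_mono nhdsWithin_le_nhds, self_mem_nhdsWithin] with s hs hs0 hsB
    exact hs ⟨hsB, hs0⟩
  have hline : ∀ z ∈ U, ∀ᶠ s : ℝ in 𝓝 0, z + s • n ∈ U := by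
    intro z hz
    have : Continuous (fun s : ℝ => z + s • n) := by fun_prop
    have h2 := this.tendsto 0
    simp only [zero_smul, add_zero] at h2
    exact h2.eventually (hU.mem_nhds hz)
  have htend : ∀ z ∈ U, Tendsto (fun s : ℝ => F (z + s • n)) (𝓝[≠] 0) (𝓝 (F z)) := by
    intro z hz
    have : Continuous (fun s : ℝ => z + s • n) := by fun_prop
    have h2 := this.tendsto 0
    simp only [zero_smul, add_zero] at h2
    exact ((hF.continuousAt (hU.mem_nhds hz)).tendsto.comp h2).mono_left nhdsWithin_le_nhds
  have hz : a • x + b • y ∈ U := hUc hx hy ha hb hab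
  refine le_of_tendsto_of_tendsto (((htend x hx).const_smul a).add ((htend y hy).const_smul b))
    (htend _ hz) ?_
  filter_upwards [hev1, (hline x hx).filter_mono nhdsWithin_le_nhds,
    (hline y hy).filter_mono nhdsWithin_le_nhds] with s hsB hsx hsy
  set γ : ℝ → ℝ × ℝ := fun t => (x + s • n) + t • (y - x) with hγ
  have hγU : ∀ t ∈ Set.Icc (0 : ℝ) 1, γ t ∈ U := by
    intro t ht
    have := hUc hsx hsy (sub_nonneg.2 ht.2) ht.1 (by ring)
    convert this using 1
    simp only [hγ]
    ext <;> simp <;> ring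
  have key := oneD (fun t => F (γ t)) ?_ ?_ b ⟨hb, by linarith⟩
  · have e0 : γ 0 = x + s • n := by simp [hγ]
    have e1 : γ 1 = y + s • n := by simp [hγ]; abel
    have e2 : γ b = a • x + b • y + s • n := by
      have : a = 1 - b := by linarith
      subst this
      simp only [hγ]
      ext <;> simp <;> ring
    have e3 : 1 - b = a := by linarith
    simp only [e0, e1, e2, e3] at key
    simpa using key
  · refine hF.comp ?_ hγU
    have : Continuous γ := by simp only [hγ]; fun_prop
    exact this.continuousOn
  · intro t ht
    have htP : γ t ∉ P := by
      intro hcon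
      apply hsB
      refine ⟨γ t, hcon, ?_⟩
      simp only [hγ]
      rw [div_eq_iff hNpos.ne', hN]
      simp [hn]; ring
    obtain ⟨δ0, h1, h2⟩ := h (γ t) (hγU t ⟨ht.1.le, ht.2.le⟩) htP (y - x)
    refine ⟨δ0, h1, fun δ hδ hδ' => ?_⟩
    have := h2 δ hδ hδ'
    have e1 : γ t + δ • (y - x) = γ (t + δ) := by simp only [hγ]; rw [add_smul]; abel
    have e2 : γ t - δ • (y - x) = γ (t - δ) := by simp only [hγ]; rw [sub_smul]; abel
    rwa [e1, e2] at this

lemma concave_le_affine {U : Set (ℝ × ℝ)} {F : ℝ × ℝ → ℝ} (hF : ConcaveOn ℝ U F)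
    {x0 : ℝ × ℝ} (hx0 : x0 ∈ U) {g : ℝ × ℝ} {c : ℝ}
    (h : ∀ᶠ x in 𝓝 x0, F x ≤ g.1 * x.1 + g.2 * x.2 + c)
    (h0 : F x0 = g.1 * x0.1 + g.2 * x0.2 + c) :
    ∀ y ∈ U, F y ≤ g.1 * y.1 + g.2 * y.2 + c := by
  intro y hy
  obtain ⟨δ0, hδ0, h1⟩ := ev_line h (y - x0)
  obtain ⟨ε, hε, hε'⟩ := exists_between (lt_min hδ0 one_pos)
  have a1 := lt_min_iff.1 hε'
  have h2 := h1 ε (by rw [abs_of_pos hε]; exact a1.1)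
  have h3 := hF.2 hx0 hy (sub_nonneg.2 a1.2.le) hε.le (by ring)
  have e : (1 - ε) • x0 + ε • y = x0 + ε • (y - x0) := by
    ext <;> simp <;> ring
  rw [e] at h3
  have h4 := h3.trans h2
  simp at h4
  rw [h0] at h4
  have : ε * F y ≤ ε * (g.1 * y.1 + g.2 * y.2 + c) := by nlinarith
  exact le_of_mul_le_mul_left this hε

lemma affine_of_local {U : Set (ℝ × ℝ)} (hU : IsOpen U) (hUc : Convex ℝ U)
    {P : Set (ℝ × ℝ)} (hP : P.Finite) {D : ℝ × ℝ → ℝ} (hD : ContinuousOn D U)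
    (h : ∀ x ∈ U, x ∉ P → LocallyAffine D x) {x0 : ℝ × ℝ} (hx0 : x0 ∈ U)
    {g : ℝ × ℝ} {c : ℝ} (h0 : ∀ᶠ x in 𝓝 x0, D x = g.1 * x.1 + g.2 * x.2 + c) :
    ∀ y ∈ U, D y = g.1 * y.1 + g.2 * y.2 + c := by
  have key : ∀ x ∈ U, x ∉ P → ∀ v : ℝ × ℝ, ∃ δ0 > 0, ∀ δ : ℝ, 0 < δ → δ < δ0 →
      D (x + δ • v) + D (x - δ • v) = 2 * D x := by
    intro x hx hxP v
    obtain ⟨W, hW, c1, c2, c3, hc⟩ := h x hx hxP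
    obtain ⟨δ0, hδ0, h1⟩ := ev_line (Q := fun y => y ∈ W) hW v
    refine ⟨δ0, hδ0, fun δ hδ hδ' => ?_⟩
    have i1 := h1 δ (by rwa [abs_of_pos hδ])
    have i2 := h1 (-δ) (by rwa [abs_neg, abs_of_pos hδ])
    rw [neg_smul, ← sub_eq_add_neg] at i2
    rw [hc _ i1, hc _ i2, hc x (mem_of_mem_nhds hW)]
    simp; ring
  have c1 : ConcaveOn ℝ U D := concave_of_local hU hUc hP hD fun x hx hxP v => by
    obtain ⟨δ0, hδ0, h1⟩ := key x hx hxP v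
    exact ⟨δ0, hδ0, fun δ a b => (h1 δ a b).le⟩
  have c2 : ConcaveOn ℝ U (fun x => - D x) :=
    concave_of_local hU hUc hP hD.neg fun x hx hxP v => by
    obtain ⟨δ0, hδ0, h1⟩ := key x hx hxP v
    exact ⟨δ0, hδ0, fun δ a b => by linarith [h1 δ a b]⟩
  intro y hy
  have l1 := concave_le_affine c1 hx0 (g := g) (c := c) (h0.mono fun x hx => hx.le)
    h0.self_of_nhds y hy
  have l2 := concave_le_affine c2 hx0 (g := -g) (c := -c)
    (h0.mono fun x hx => by simp [hx])
    (by simp [h0.self_of_nhds]; ring) y hy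
  simp at l2
  linarith

lemma trop_of_local {P : Set (ℝ × ℝ)} (hP : P.Finite) {F : ℝ × ℝ → ℝ} (hF : Continuous F)
    (M : ℤ) (h : ∀ x0 ∉ P, ∃ g : ℤ × ℤ, |g.1| ≤ M ∧ |g.2| ≤ M ∧ ∃ c : ℝ, ∃ l : ℤ × ℤ,
      ∃ m : ℝ, 0 ≤ m ∧ ∀ᶠ x in 𝓝 x0, F x = g.1 * x.1 + g.2 * x.2 + c +
        m * min 0 (dt l (x - x0))) : IsTropPoly F := by
  classical
  have hdt0 : ∀ l, dt l 0 = 0 := fun l => by simp [dt]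
  have hconc : ConcaveOn ℝ Set.univ F := by
    refine concave_of_local isOpen_univ convex_univ hP hF.continuousOn fun x _ hx v => ?_
    obtain ⟨g, -, -, c, l, m, hm, hev⟩ := h x hx
    obtain ⟨δ0, hδ0, h1⟩ := ev_line hev v
    refine ⟨δ0, hδ0, fun δ hδ hδ' => ?_⟩
    have i1 := h1 δ (by rwa [abs_of_pos hδ])
    have i2 := h1 (-δ) (by rwa [abs_neg, abs_of_pos hδ])
    rw [neg_smul, ← sub_eq_add_neg] at i2
    rw [i1, i2, hev.self_of_nhds, sub_self, hdt0]
    have e1 : x + δ • v - x = δ • v := by abel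
    have e2 : x - δ • v - x = -(δ • v) := by abel
    have e3 : dt l (-(δ • v)) = - dt l (δ • v) := by simp [dt]; ring
    rw [e1, e2, e3]
    have : m * min 0 (dt l (δ • v)) + m * min 0 (-dt l (δ • v)) ≤ 0 := by
      have a1 : min 0 (dt l (δ • v)) ≤ 0 := min_le_left _ _
      have a2 : min 0 (-dt l (δ • v)) ≤ 0 := min_le_left _ _
      nlinarith
    simp
    linarith
  -- the pieces
  let Good : ℤ × ℤ → ℝ → Prop := fun g c =>
    (∀ y : ℝ × ℝ, F y ≤ g.1 * y.1 + g.2 * y.2 + c) ∧ ∃ x : ℝ × ℝ, F x = g.1 * x.1 + g.2 * x.2 + c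
  have huniq : ∀ g c c', Good g c → Good g c' → c = c' := by
    rintro g c c' ⟨h1, x, hx⟩ ⟨h2, x', hx'⟩
    linarith [h1 x', h2 x]
  have hpt : ∀ x0 ∉ P, ∃ g : ℤ × ℤ, |g.1| ≤ M ∧ |g.2| ≤ M ∧ ∃ c : ℝ,
      Good g c ∧ F x0 = g.1 * x0.1 + g.2 * x0.2 + c := by
    intro x0 hx0
    obtain ⟨g, hg1, hg2, c, l, m, hm, hev⟩ := h x0 hx0
    have he : F x0 = g.1 * x0.1 + g.2 * x0.2 + c := by
      have := hev.self_of_nhds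
      simpa [hdt0] using this
    refine ⟨g, hg1, hg2, c, ⟨fun y => ?_, x0, he⟩, he⟩
    refine concave_le_affine hconc (Set.mem_univ x0) (g := toR g) (c := c) ?_ he y (Set.mem_univ _)
    filter_upwards [hev] with x hx
    rw [hx]
    have : min 0 (dt l (x - x0)) ≤ 0 := min_le_left _ _
    simp only [toR]
    nlinarith
  let A : Finset (ℤ × ℤ) := ((Finset.Icc (-M) M) ×ˢ (Finset.Icc (-M) M)).filter
    (fun g => ∃ c, Good g c)
  let a : ℤ × ℤ → ℝ := fun g => if hg : ∃ c, Good g c then hg.choose else 0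
  have ha : ∀ g c, Good g c → a g = c := by
    intro g c hg
    have hex : ∃ c, Good g c := ⟨c, hg⟩
    have : a g = hex.choose := dif_pos hex
    rw [this]
    exact huniq g _ _ hex.choose_spec hg
  have hdense : Dense Pᶜ := by
    have := (dense_univ (X := ℝ × ℝ)).sdiff_finite hP
    rwa [← Set.compl_eq_univ_sdiff] at this
  have hmem : ∀ x0 ∉ P, ∃ g ∈ A, F x0 = g.1 * x0.1 + g.2 * x0.2 + a g := by
    intro x0 hx0
    obtain ⟨g, hg1, hg2, c, hgood, he⟩ := hpt x0 hx0
    refine ⟨g, ?_, ?_⟩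
    · simp only [A, Finset.mem_filter, Finset.mem_product, Finset.mem_Icc]
      exact ⟨⟨abs_le.1 hg1, abs_le.1 hg2⟩, c, hgood⟩
    · rw [ha g c hgood]; exact he
  have hA : A.Nonempty := by
    obtain ⟨x0, hx0⟩ := hdense.nonempty
    obtain ⟨g, hg, _⟩ := hmem x0 hx0
    exact ⟨g, hg⟩
  refine ⟨A, hA, a, ?_⟩
  have hcont : Continuous (fun x : ℝ × ℝ =>
      A.inf' hA fun kl => (kl.1 : ℝ) * x.1 + (kl.2 : ℝ) * x.2 + a kl) := by
    refine Continuous.finset_inf'_apply hA fun i _ => ?_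
    fun_prop
  have := Continuous.ext_on hdense hF hcont ?_
  · intro x; exact congrFun this x
  · intro x hx
    apply le_antisymm
    · refine Finset.le_inf' _ _ fun g hg => ?_
      obtain ⟨c, hc⟩ := (Finset.mem_filter.1 hg).2
      rw [ha g c hc]
      exact hc.1 x
    · obtain ⟨g, hg, he⟩ := hmem x hx
      rw [he]
      exact Finset.inf'_le (fun kl : ℤ × ℤ => (kl.1 : ℝ) * x.1 + (kl.2 : ℝ) * x.2 + a kl) hg

/-! ## Part 4: primitive vectors, potentials of weighted graphs -/

lemma prim_ne_zero {l : ℤ × ℤ} (h : Int.gcd l.1 l.2 = 1) : l ≠ 0 := by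
  rintro rfl; simp at h

lemma toR_ne_zero {l : ℤ × ℤ} (h : l ≠ 0) : toR l ≠ 0 := by
  intro h'
  apply h
  simp [toR, Prod.ext_iff] at h'
  exact Prod.ext h'.1 h'.2

lemma toR_neg (l : ℤ × ℤ) : toR (-l) = - toR l := by simp [toR]

lemma prim_parallel {l l' : ℤ × ℤ} (h : Int.gcd l.1 l.2 = 1) (h' : Int.gcd l'.1 l'.2 = 1)
    (hd : l.1 * l'.2 = l.2 * l'.1) : l' = l ∨ l' = -l := by
  obtain ⟨a, b⟩ := l
  obtain ⟨p, q⟩ := l'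
  simp only at h h' hd
  have c1 : IsCoprime a b := Int.isCoprime_iff_gcd_eq_one.2 h
  have c2 : IsCoprime p q := Int.isCoprime_iff_gcd_eq_one.2 h'
  have d1 : a ∣ p := c1.dvd_of_dvd_mul_left (Dvd.intro _ hd)
  have d2 : p ∣ a := c2.dvd_of_dvd_mul_right (Dvd.intro_left _ hd.symm)
  have d3 : b ∣ q := c1.symm.dvd_of_dvd_mul_left (Dvd.intro _ hd.symm)
  have d4 : q ∣ b := c2.symm.dvd_of_dvd_mul_right (Dvd.intro_left _ hd)
  have e1 := Int.natAbs_eq_natAbs_iff.1 (Nat.dvd_antisymm (Int.natAbs_dvd_natAbs.2 d1) (Int.natAbs_dvd_natAbs.2 d2))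
  have e2 := Int.natAbs_eq_natAbs_iff.1 (Nat.dvd_antisymm (Int.natAbs_dvd_natAbs.2 d3) (Int.natAbs_dvd_natAbs.2 d4))
  simp only [Prod.mk.injEq, Prod.neg_mk]
  rcases e1 with rfl | rfl <;> rcases e2 with rfl | rfl
  · left; simp
  · have : a * q = 0 := by nlinarith
    rcases mul_eq_zero.1 this with rfl | rfl
    · right; simp
    · left; simp
  · have : p * b = 0 := by nlinarith
    rcases mul_eq_zero.1 this with rfl | rfl
    · left; simp
    · right; simp
  · right; simp

lemma primOut_unique {d : ℝ × ℝ} {l l' : ℤ × ℤ} (h : PrimOut d l) (h' : PrimOut d l') :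
    l = l' := by
  obtain ⟨g, t, ht, hd⟩ := h
  obtain ⟨g', t', ht', hd'⟩ := h'
  have e : t • toR l = t' • toR l' := hd.symm.trans hd'
  have e1 : t * l.1 = t' * l'.1 := by simpa [toR] using congrArg Prod.fst e
  have e2 : t * l.2 = t' * l'.2 := by simpa [toR] using congrArg Prod.snd e
  have hpar : (l.1 : ℝ) * l'.2 = l.2 * l'.1 := by
    have : t * t' * ((l.1 : ℝ) * l'.2) = t * t' * (l.2 * l'.1) := by
      calc t * t' * ((l.1 : ℝ) * l'.2) = (t * l.1) * (t' * l'.2) := by ring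
        _ = (t' * l'.1) * (t * l.2) := by rw [e1, e2]
        _ = _ := by ring
    exact mul_left_cancel₀ (mul_pos ht ht').ne' this
  rcases prim_parallel g g' (by exact_mod_cast hpar) with h1 | h1
  · exact h1.symm
  · exfalso
    apply prim_ne_zero g
    have p : 0 < t + t' := add_pos ht ht'
    rw [h1] at e1 e2
    have f1 : (t + t') * (l.1 : ℝ) = 0 := by push_cast [Prod.fst_neg] at e1; linarith
    have f2 : (t + t') * (l.2 : ℝ) = 0 := by push_cast [Prod.snd_neg] at e2; linarith
    have f1 := (mul_eq_zero.1 f1).resolve_left p.ne'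
    have f2 := (mul_eq_zero.1 f2).resolve_left p.ne'
    exact Prod.ext (by exact_mod_cast f1) (by exact_mod_cast f2)

lemma prim_spec {d : ℝ × ℝ} (h : RatDir d) : PrimOut d (prim d) := by
  have : prim d = h.choose := dif_pos h
  rw [this]; exact h.choose_spec

lemma prim_eq {d : ℝ × ℝ} {l : ℤ × ℤ} (h : PrimOut d l) : prim d = l :=
  primOut_unique (prim_spec ⟨l, h⟩) h

lemma primOut_neg {d : ℝ × ℝ} {l : ℤ × ℤ} (h : PrimOut d l) : PrimOut (-d) (-l) := by
  obtain ⟨g, t, ht, hd⟩ := h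
  exact ⟨by simpa using g, t, ht, by rw [hd, toR_neg, smul_neg]⟩

lemma prim_neg {d : ℝ × ℝ} (h : RatDir d) : prim (-d) = - prim d :=
  prim_eq (primOut_neg (prim_spec h))

lemma ratDir_neg {d : ℝ × ℝ} (h : RatDir d) : RatDir (-d) := by
  obtain ⟨l, hl⟩ := h
  exact ⟨-l, primOut_neg hl⟩

lemma ratDir_toR {a : ℤ × ℤ} (h : a ≠ 0) : RatDir (toR a) := by
  have hg : 0 < Int.gcd a.1 a.2 := by
    rw [Int.gcd_pos_iff]
    by_contra hcon
    push Not at hcon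
    exact h (Prod.ext hcon.1 hcon.2)
  obtain ⟨p, q, hco, h1, h2⟩ := Int.exists_gcd_one hg
  refine ⟨(p, q), hco, (Int.gcd a.1 a.2 : ℝ), by exact_mod_cast hg, ?_⟩
  ext
  · simp only [toR]; rw [h1]; push_cast; simp [mul_comm]; left; rw [← h1]
  · simp only [toR]; rw [h2]; push_cast; simp [mul_comm]; left; rw [← h2]

lemma dt_sub (l : ℤ × ℤ) (x y : ℝ × ℝ) : dt l (x - y) = dt l x - dt l y := by
  simp [dt]; ring

lemma min_dt_neg (l : ℤ × ℤ) (x : ℝ × ℝ) : min 0 (dt (-l) x) = min 0 (dt l x) - dt l x := by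
  rw [dt_neg]
  rcases le_total 0 (dt l x) with h | h
  · rw [min_eq_left h, min_eq_right (by linarith)]; ring
  · rw [min_eq_right h, min_eq_left (by linarith)]; ring

lemma dt_prim_zero {d : ℝ × ℝ} (h : RatDir d) : dt (prim d) d = 0 := by
  obtain ⟨_, t, ht, hd⟩ := prim_spec h
  exact onRay_dt ⟨t, ht, hd⟩

lemma seg_onRay {e : Seg} (he : RatDir (e.2 - e.1)) {x : ℝ × ℝ} (h1 : x ≠ e.1) (h2 : x ≠ e.2)
    (hx : x ∈ seg e) :
    onRay (prim (e.2 - e.1)) (x - e.1) ∧ ¬ onRay (prim (e.2 - e.1)) (x - e.2) := by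
  obtain ⟨hg, t, ht, hd⟩ := prim_spec he
  rw [seg, segment_eq_image'] at hx
  obtain ⟨s, hs, rfl⟩ := hx
  have hs0 : 0 < s := by
    rcases hs.1.eq_or_lt with h | h
    · exfalso; apply h1; rw [← h]; simp
    · exact h
  have hs1 : s < 1 := by
    rcases hs.2.eq_or_lt with h | h
    · exfalso; apply h2; rw [h]; simp
    · exact h
  constructor
  · refine ⟨s * t, by positivity, ?_⟩
    rw [mul_smul, ← hd]; simp
  · rintro ⟨u, hu, he'⟩
    have e3 : e.1 + s • (e.2 - e.1) - e.2 = (-(1 - s) * t) • toR (prim (e.2 - e.1)) := by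
      rw [mul_smul, ← hd]
      ext <;> simp <;> ring
    rw [e3, ← sub_eq_zero, ← sub_smul] at he'
    rcases smul_eq_zero.1 he' with h | h
    · nlinarith
    · exact toR_ne_zero (prim_ne_zero hg) h

lemma not_seg_onRay {e : Seg} (he : RatDir (e.2 - e.1)) {x : ℝ × ℝ}
    (hx : x ∉ seg e) :
    onRay (prim (e.2 - e.1)) (x - e.1) ↔ onRay (prim (e.2 - e.1)) (x - e.2) := by
  obtain ⟨hg, t, ht, hd⟩ := prim_spec he
  constructor
  · rintro ⟨u, hu, he'⟩
    refine ⟨u - t, ?_, ?_⟩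
    · by_contra hcon
      apply hx
      rw [seg, segment_eq_image']
      refine ⟨u / t, ⟨by positivity, ?_⟩, ?_⟩
      · rw [div_le_one ht]; linarith
      · have : x = e.1 + u • toR (prim (e.2 - e.1)) := by rw [← he']; abel
        simp only
        rw [this]
        nth_rw 1 [hd]
        rw [smul_smul, div_mul_cancel₀ _ ht.ne']
    · rw [sub_smul, ← hd, ← he']; abel
  · rintro ⟨u, hu, he'⟩
    refine ⟨u + t, by positivity, ?_⟩
    rw [add_smul, ← hd, ← he']; abel

lemma ray_onRay {r : (ℝ × ℝ) × (ℤ × ℤ)} {x : ℝ × ℝ} (h : x ≠ r.1) :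
    onRay r.2 (x - r.1) ↔ x ∈ raySet r := by
  constructor
  · rintro ⟨t, ht, e⟩
    exact ⟨t, ht.le, by rw [← e]; abel⟩
  · rintro ⟨t, ht, e⟩
    refine ⟨t, ?_, by rw [e]; abel⟩
    rcases ht.eq_or_lt with h' | h'
    · exfalso; apply h; rw [e, ← h']; simp
    · exact h'

open Classical in
/-- The kinks at `x0` of the potential of a weighted graph. -/
noncomputable def kinks (T : Finset Seg) (n : Seg → ℤ) (R : Finset ((ℝ × ℝ) × (ℤ × ℤ)))
    (k : (ℝ × ℝ) × (ℤ × ℤ) → ℤ) (x0 x : ℝ × ℝ) : ℝ :=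
  ∑ e ∈ T, (if x0 ∈ seg e then (n e : ℝ) * min 0 (dt (prim (e.2 - e.1)) (x - x0)) else 0) +
  ∑ r ∈ R, (if x0 ∈ raySet r then (k r : ℝ) * min 0 (dt r.2 (x - x0)) else 0)

open Classical in
/-- The balancing condition of a weighted graph. -/
def grBal (T : Finset Seg) (n : Seg → ℤ) (R : Finset ((ℝ × ℝ) × (ℤ × ℤ)))
    (k : (ℝ × ℝ) × (ℤ × ℤ) → ℤ) (p : ℝ × ℝ) : Prop :=
  ∑ e ∈ T, (if e.1 = p then n e • prim (e.2 - e.1) else 0) -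
  ∑ e ∈ T, (if e.2 = p then n e • prim (e.2 - e.1) else 0) +
  ∑ r ∈ R, (if r.1 = p then k r • r.2 else 0) = 0

theorem graph_potential (T : Finset Seg) (n : Seg → ℤ) (R : Finset ((ℝ × ℝ) × (ℤ × ℤ)))
    (k : (ℝ × ℝ) × (ℤ × ℤ) → ℤ) (hT : ∀ e ∈ T, RatDir (e.2 - e.1))
    (hR : ∀ r ∈ R, Int.gcd r.2.1 r.2.2 = 1) (hb : ∀ p, grBal T n R k p) :
    ∃ F : ℝ × ℝ → ℝ, Continuous F ∧ ∃ M : ℤ, ∀ x0, (∀ e ∈ T, e.1 ≠ x0 ∧ e.2 ≠ x0) →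
      (∀ r ∈ R, r.1 ≠ x0) → ∃ g : ℤ × ℤ, |g.1| ≤ M ∧ |g.2| ≤ M ∧ ∃ c : ℝ,
      ∀ᶠ x in 𝓝 x0, F x = g.1 * x.1 + g.2 * x.2 + c + kinks T n R k x0 x := by
  classical
  let v : (T ⊕ T) ⊕ R → ℝ × ℝ :=
    Sum.elim (Sum.elim (fun e => e.1.1) (fun e => e.1.2)) (fun r => r.1.1)
  let l : (T ⊕ T) ⊕ R → ℤ × ℤ :=
    Sum.elim (Sum.elim (fun e => prim (e.1.2 - e.1.1)) (fun e => prim (e.1.2 - e.1.1)))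
      (fun r => r.1.2)
  let w : (T ⊕ T) ⊕ R → ℤ :=
    Sum.elim (Sum.elim (fun e => n e.1) (fun e => - n e.1)) (fun r => k r.1)
  have hl : ∀ i, l i ≠ 0 := by
    rintro ((e | e) | r)
    · exact prim_ne_zero (prim_spec (hT e.1 e.2)).1
    · exact prim_ne_zero (prim_spec (hT e.1 e.2)).1
    · exact prim_ne_zero (hR r.1 r.2)
  have hbal : chBal v l w := by
    intro p
    have := hb p
    unfold grBal at this
    rw [Fintype.sum_sum_type, Fintype.sum_sum_type]
    simp only [v, l, w, Sum.elim_inl, Sum.elim_inr]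
    refine Eq.trans ?_ this
    rw [sub_eq_add_neg, ← Finset.sum_neg_distrib]
    rw [← Finset.sum_coe_sort T, ← Finset.sum_coe_sort T, ← Finset.sum_coe_sort R]
    congr 1
    congr 1
    refine Finset.sum_congr rfl fun e _ => ?_
    by_cases h : e.1.2 = p
    · exact (if_pos h).trans (by rw [if_pos h, neg_smul])
    · exact (if_neg h).trans (by rw [if_neg h, neg_zero])
  obtain ⟨M, hM⟩ := ch_bound v l w hbal hl
  refine ⟨chF v l w, ch_cont v l w hbal hl, M, fun x0 hx0 hx0' => ?_⟩
  obtain ⟨g, h1, h2, c, hev⟩ := hM x0 (by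
    rintro ((e | e) | r)
    · exact (hx0 e.1 e.2).1
    · exact (hx0 e.1 e.2).2
    · exact hx0' r.1 r.2)
  refine ⟨g, h1, h2, c, ?_⟩
  filter_upwards [hev] with x hx
  rw [hx]
  congr 1
  rw [Fintype.sum_sum_type, Fintype.sum_sum_type]
  simp only [v, l, w, Sum.elim_inl, Sum.elim_inr]
  unfold kinks
  rw [← Finset.sum_coe_sort T, ← Finset.sum_coe_sort R]
  congr 1
  · rw [← Finset.sum_add_distrib]
    refine Finset.sum_congr rfl fun e _ => ?_
    have hd := hT e.1 e.2
    have hn := hx0 e.1 e.2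
    by_cases hs : x0 ∈ seg e.1
    · obtain ⟨o1, o2⟩ := seg_onRay hd hn.1.symm hn.2.symm hs
      simp only [o1, o2, hs, if_true, if_false]
      have := onRay_dt o1
      rw [dt_sub] at this
      rw [dt_sub, dt_sub]
      have e1 : dt (prim (e.1.2 - e.1.1)) x0 = dt (prim (e.1.2 - e.1.1)) e.1.1 := by linarith
      rw [e1]; simp
    · have o := not_seg_onRay hd hs
      have := dt_prim_zero hd
      have e1 : dt (prim (e.1.2 - e.1.1)) (x - e.1.1) = dt (prim (e.1.2 - e.1.1)) (x - e.1.2) := by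
        have h' := dt_sub (prim (e.1.2 - e.1.1)) e.1.2 e.1.1
        rw [dt_sub, dt_sub]; linarith
      simp only [o, e1, hs, if_false]
      push_cast
      ring
  · refine Finset.sum_congr rfl fun r _ => ?_
    have o := ray_onRay (hx0' r.1 r.2).symm
    by_cases hs : x0 ∈ raySet r.1
    · have o1 := o.2 hs
      simp only [o1, hs, if_true]
      have := onRay_dt o1
      rw [dt_sub] at this
      rw [dt_sub, dt_sub]
      have e1 : dt r.1.2 x0 = dt r.1.2 r.1.1 := by linarith
      rw [e1]
    · have o1 : ¬ onRay r.1.2 (x0 - r.1.1) := fun h => hs (o.1 h)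
      simp only [o1, hs, if_false, mul_zero]

/-! ## Part 5: geometry of convex lattice polygons -/

/-- The determinant of two plane vectors. -/
def dd (u w : ℝ × ℝ) : ℝ := u.1 * w.2 - u.2 * w.1

lemma clm_form (f : StrongDual ℝ (ℝ × ℝ)) (x : ℝ × ℝ) :
    f x = f (1, 0) * x.1 + f (0, 1) * x.2 := by
  have : x = x.1 • ((1 : ℝ), (0 : ℝ)) + x.2 • ((0 : ℝ), (1 : ℝ)) := by
    ext <;> simp
  conv_lhs => rw [this]
  rw [map_add, map_smul, map_smul]
  simp [mul_comm]

/-- A point where a supporting affine function vanishes is on the frontier. -/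
lemma frontier_of_support {Ω : Set (ℝ × ℝ)} {p : ℝ × ℝ} {c : ℝ} (hp : p ≠ 0)
    (h : ∀ y ∈ Ω, 0 ≤ p.1 * y.1 + p.2 * y.2 + c) {x : ℝ × ℝ} 
    (h0 : p.1 * x.1 + p.2 * x.2 + c = 0) : x ∉ interior Ω := by
  intro hx
  have hc : ContinuousAt (fun t : ℝ => x - t • p) 0 := by fun_prop
  have hm : ∀ᶠ t in 𝓝 (0 : ℝ), x - t • p ∈ Ω := by
    apply hc.eventually
    simpa using mem_interior_iff_mem_nhds.1 hx
  have hm2 : ∀ᶠ t in 𝓝[>] (0 : ℝ), x - t • p ∈ Ω := hm.filter_mono nhdsWithin_le_nhds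
  obtain ⟨t, ht, ht0⟩ := (hm2.and self_mem_nhdsWithin).exists
  have := h _ ht
  simp only [Prod.fst_sub, Prod.snd_sub, Prod.smul_fst, Prod.smul_snd, smul_eq_mul] at this
  have hpos : 0 < p.1 * p.1 + p.2 * p.2 := by
    rcases eq_or_ne p.1 0 with h1 | h1
    · rcases eq_or_ne p.2 0 with h2 | h2
      · exact absurd (Prod.ext h1 h2) hp
      · nlinarith [mul_self_pos.2 h2, mul_self_nonneg p.1]
    · nlinarith [mul_self_pos.2 h1, mul_self_nonneg p.2]
  have : 0 < t * (p.1 * p.1 + p.2 * p.2) := mul_pos ht0 hpos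
  nlinarith

lemma poly_compact {Ω : Set (ℝ × ℝ)} (hΩ : IsLatticePolygon Ω) : IsCompact Ω := by
  obtain ⟨⟨S, rfl⟩, _⟩ := hΩ
  exact ((Finset.finite_toSet S).image toR).isCompact_convexHull (𝕜 := ℝ)

lemma poly_convex {Ω : Set (ℝ × ℝ)} (hΩ : IsLatticePolygon Ω) : Convex ℝ Ω := by
  obtain ⟨⟨S, rfl⟩, _⟩ := hΩ
  exact convex_convexHull _ _

lemma poly_ext {Ω : Set (ℝ × ℝ)} (hΩ : IsLatticePolygon Ω) :
    (Set.extremePoints ℝ Ω).Finite ∧ ∀ v ∈ Set.extremePoints ℝ Ω, ∃ z, v = toR z := by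
  obtain ⟨⟨S, rfl⟩, _⟩ := hΩ
  have h := extremePoints_convexHull_subset (𝕜 := ℝ) (A := toR '' (S : Set (ℤ × ℤ)))
  refine ⟨((Finset.finite_toSet S).image toR).subset h, fun v hv => ?_⟩
  obtain ⟨z, _, rfl⟩ := h hv
  exact ⟨z, rfl⟩

lemma poly_closure {Ω : Set (ℝ × ℝ)} (hΩ : IsLatticePolygon Ω) : closure (interior Ω) = Ω := by
  rw [(poly_convex hΩ).closure_interior_eq_closure_of_nonempty_interior hΩ.2,
    (poly_compact hΩ).isClosed.closure_eq]

/-- The vertex adjacent to `v` in the orientation `ε`. -/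
lemma poly_nbr {Ω : Set (ℝ × ℝ)} (hΩ : IsLatticePolygon Ω) {v : ℝ × ℝ}
    (hv : v ∈ Set.extremePoints ℝ Ω) (f : StrongDual ℝ (ℝ × ℝ))
    {K : Set (ℝ × ℝ)} (hK : K.Finite) (hKΩ : Ω = convexHull ℝ K)
    (hf : ∀ w ∈ K, w ≠ v → f v < f w) (hne : ∃ w ∈ K, w ≠ v) (ε : ℝ) (hε : ε ≠ 0) :
    ∃ a, IsSide Ω v a ∧ f v < f a ∧ ∀ c ∈ Ω, 0 ≤ ε * dd (a - v) (c - v) := by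
  set f1 := f (1, 0) with hf1
  set f2 := f (0, 1) with hf2
  set h : ℝ × ℝ → ℝ := fun w => ε * (-f2 * w.1 + f1 * w.2) with hh
  have hn2 : ∃ w, w ∈ K \ {v} := by
    obtain ⟨w, h1, h2⟩ := hne; exact ⟨w, h1, h2⟩
  obtain ⟨a0, ha0, hmin⟩ := Set.exists_min_image (K \ {v}) (fun w => h (w - v) / f (w - v))
    (hK.subset Set.diff_subset) hn2
  have hfp : ∀ w ∈ K \ {v}, 0 < f (w - v) := fun w hw => by
    rw [map_sub]; linarith [hf w hw.1 hw.2]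
  have hfa0 := hfp a0 ha0
  have hsq : 0 < f1 ^ 2 + f2 ^ 2 := by
    by_contra hcon
    have h1 : f1 = 0 := by nlinarith [sq_nonneg f1, sq_nonneg f2]
    have h2 : f2 = 0 := by nlinarith [sq_nonneg f1, sq_nonneg f2]
    rw [clm_form, ← hf1, ← hf2, h1, h2] at hfa0
    simp at hfa0
  -- the supporting function on `K`
  have hK0 : ∀ c ∈ K, 0 ≤ ε * dd (a0 - v) (c - v) := by
    intro c hc
    by_cases hcv : c = v
    · subst hcv; simp [dd]
    have hm := hmin c ⟨hc, hcv⟩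
    have hfc := hfp c ⟨hc, hcv⟩
    rw [div_le_div_iff₀ hfa0 hfc] at hm
    have e : (f1 ^ 2 + f2 ^ 2) * (ε * dd (a0 - v) (c - v)) =
        h (c - v) * f (a0 - v) - h (a0 - v) * f (c - v) := by
      rw [clm_form f (a0 - v), clm_form f (c - v), ← hf1, ← hf2]
      simp only [hh, dd]; ring
    have : 0 ≤ (f1 ^ 2 + f2 ^ 2) * (ε * dd (a0 - v) (c - v)) := by rw [e]; linarith
    exact nonneg_of_mul_nonneg_right this hsq
  have hcvx : Convex ℝ {c : ℝ × ℝ | 0 ≤ ε * dd (a0 - v) (c - v)} := by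
    intro x hx y hy s t hs ht hst
    simp only [Set.mem_setOf_eq, dd] at *
    have : ε * ((a0 - v).1 * (s • x + t • y - v).2 - (a0 - v).2 * (s • x + t • y - v).1) =
      s * (ε * ((a0 - v).1 * (x - v).2 - (a0 - v).2 * (x - v).1)) +
      t * (ε * ((a0 - v).1 * (y - v).2 - (a0 - v).2 * (y - v).1)) := by
      have : s = 1 - t := by linarith
      subst this
      simp; ring
    rw [this]; positivity
  have hΩ0 : ∀ c ∈ Ω, 0 ≤ ε * dd (a0 - v) (c - v) := by
    intro c hc
    rw [hKΩ] at hc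
    exact convexHull_min hK0 hcvx hc
  have ha0v : a0 - v ≠ 0 := by
    intro h'; rw [h'] at hfa0; simp at hfa0
  have hfront : ∀ x ∈ Ω, dd (a0 - v) (x - v) = 0 → x ∈ frontier Ω := by
    intro x hx hx0
    rw [frontier, (poly_compact hΩ).isClosed.closure_eq]
    refine ⟨hx, ?_⟩
    refine frontier_of_support (p := (-(ε * (a0 - v).2), ε * (a0 - v).1))
      (c := ε * ((a0 - v).2 * v.1 - (a0 - v).1 * v.2)) ?_ ?_ ?_
    · intro h'
      rw [Prod.ext_iff] at h'
      simp only [Prod.fst_zero, Prod.snd_zero, neg_eq_zero, mul_eq_zero, hε, false_or] at h'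
      exact ha0v (Prod.ext h'.2 h'.1)
    · intro y hy
      have := hΩ0 y hy
      simp only [dd, Prod.fst_sub, Prod.snd_sub] at *
      linarith
    · have : ε * dd (a0 - v) (x - v) = 0 := by rw [hx0, mul_zero]
      simp only [dd, Prod.fst_sub, Prod.snd_sub] at *
      linarith
  -- the face
  have hBc : IsCompact (Ω ∩ {x | dd (a0 - v) (x - v) = 0}) := by
    refine (poly_compact hΩ).inter_right (isClosed_eq ?_ continuous_const)
    unfold dd; fun_prop
  have ha0Ω : a0 ∈ Ω := by rw [hKΩ]; exact subset_convexHull _ _ ha0.1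
  have ha0B : a0 ∈ Ω ∩ {x | dd (a0 - v) (x - v) = 0} := ⟨ha0Ω, by simp [dd]; ring⟩
  obtain ⟨a, ha, hmax⟩ := hBc.exists_isMaxOn ⟨a0, ha0B⟩ f.continuous.continuousOn
  have hfa : f v < f a := by
    have := hmax ha0B
    simp only [Set.mem_setOf_eq] at this
    have := hf a0 ha0.1 ha0.2
    linarith
  -- points of the face with the same value of `f`
  have hinj : ∀ x, dd (a0 - v) (x - v) = 0 → x - v = (f (x - v) / f (a0 - v)) • (a0 - v) := by
    intro x hx
    have h1 : f (a0 - v) • (x - v) = f (x - v) • (a0 - v) := by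
      rw [clm_form f (a0 - v), clm_form f (x - v), ← hf1, ← hf2]
      simp only [dd] at hx
      ext
      · simp only [Prod.smul_fst, smul_eq_mul]; linear_combination (-f2) * hx
      · simp only [Prod.smul_snd, smul_eq_mul]; linear_combination (f1) * hx
    rw [div_eq_inv_mul, mul_smul, ← h1, smul_smul, inv_mul_cancel₀ hfa0.ne', one_smul]
  have hinj2 : ∀ x, dd (a0 - v) (x - v) = 0 → f x = f a → x = a := by
    intro x hx hxa
    have h1 := hinj x hx
    have h2 := hinj a ha.2
    rw [map_sub f x, hxa, ← map_sub, ← h2] at h1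
    exact sub_left_injective h1
  refine ⟨a, ⟨?_, hv, ?_, ?_⟩, hfa, ?_⟩
  · rintro rfl; exact lt_irrefl _ hfa
  · rw [mem_extremePoints]
    refine ⟨ha.1, fun x hx y hy hxy => ?_⟩
    obtain ⟨s, t, hs, ht, hst, hsum⟩ := hxy
    have px := hΩ0 x hx
    have py := hΩ0 y hy
    have hs1 : s = 1 - t := by linarith
    have hz : s * (ε * dd (a0 - v) (x - v)) + t * (ε * dd (a0 - v) (y - v)) = 0 := by
      have : ε * dd (a0 - v) (a - v) = 0 := by rw [ha.2, mul_zero]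
      rw [← this, ← hsum]
      subst hs1
      simp [dd]; ring
    have m1 := mul_nonneg hs.le px
    have m2 := mul_nonneg ht.le py
    have zx : dd (a0 - v) (x - v) = 0 := by
      have : s * (ε * dd (a0 - v) (x - v)) = 0 := by linarith
      simpa [hs.ne', hε] using this
    have zy : dd (a0 - v) (y - v) = 0 := by
      have : t * (ε * dd (a0 - v) (y - v)) = 0 := by linarith
      simpa [ht.ne', hε] using this
    have fx : f x ≤ f a := hmax ⟨hx, zx⟩
    have fy : f y ≤ f a := hmax ⟨hy, zy⟩
    have fs : s * f x + t * f y = f a := by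
      rw [← hsum, map_add, map_smul, map_smul, smul_eq_mul, smul_eq_mul]
    subst hs1
    have gx : f x = f a := by nlinarith
    have gy : f y = f a := by nlinarith
    exact ⟨hinj2 x zx gx, hinj2 y zy gy⟩
  · intro x hx
    refine hfront x ((poly_convex hΩ).segment_subset hv.1 ha.1 hx) ?_
    rw [segment_eq_image'] at hx
    obtain ⟨s, _, rfl⟩ := hx
    have := ha.2
    simp only [dd, Set.mem_setOf_eq, Prod.fst_sub, Prod.snd_sub, Prod.fst_add, Prod.snd_add,
      Prod.smul_fst, Prod.smul_snd, smul_eq_mul] at this ⊢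
    linear_combination s * this
  · intro c hc
    rw [hinj a ha.2]
    have h1 := hΩ0 c hc
    have h2 : 0 < f (a - v) / f (a0 - v) := div_pos (by rw [map_sub]; linarith) hfa0
    have : ε * dd ((f (a - v) / f (a0 - v)) • (a0 - v)) (c - v) =
      (f (a - v) / f (a0 - v)) * (ε * dd (a0 - v) (c - v)) := by
      simp [dd]; ring
    rw [this]; positivity

lemma ext_ray {Ω : Set (ℝ × ℝ)} {v a c : ℝ × ℝ} (hv : v ∈ Set.extremePoints ℝ Ω)
    (ha : a ∈ Set.extremePoints ℝ Ω) (hc : c ∈ Set.extremePoints ℝ Ω) (hva : v ≠ a) (hvc : v ≠ c)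
    {α : ℝ} (hα : 0 ≤ α) (h : c - v = α • (a - v)) : c = a := by
  have hα0 : 0 < α := by
    rcases hα.eq_or_lt with h' | h'
    · rw [← h', zero_smul, sub_eq_zero] at h; exact absurd h.symm hvc
    · exact h'
  rcases lt_trichotomy α 1 with h1 | h1 | h1
  · exfalso
    have : c ∈ openSegment ℝ v a := by
      rw [openSegment_eq_image']
      exact ⟨α, ⟨hα0, h1⟩, by simp only; rw [← h]; abel⟩
    exact hvc ((mem_extremePoints.1 hc).2 v hv.1 a ha.1 this).1
  · rw [h1, one_smul] at h; exact sub_left_injective h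
  · exfalso
    have : a ∈ openSegment ℝ v c := by
      rw [openSegment_eq_image']
      refine ⟨α⁻¹, ⟨by positivity, inv_lt_one_of_one_lt₀ h1⟩, ?_⟩
      simp only; rw [h, smul_smul, inv_mul_cancel₀ hα0.ne', one_smul]; abel
    exact hva ((mem_extremePoints.1 ha).2 v hv.1 c hc.1 this).1

/-- Every vertex of a polygon is on exactly two sides. -/
theorem poly_two_sides {Ω : Set (ℝ × ℝ)} (hΩ : IsLatticePolygon Ω) {v : ℝ × ℝ}
    (hv : v ∈ Set.extremePoints ℝ Ω) :
    ∃ a b, a ≠ b ∧ IsSide Ω v a ∧ IsSide Ω v b ∧ ∀ c, IsSide Ω v c → c = a ∨ c = b := by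
  obtain ⟨K, hK, hKΩ⟩ : ∃ K : Set (ℝ × ℝ), K.Finite ∧ Ω = convexHull ℝ K := by
    obtain ⟨⟨S, h⟩, _⟩ := hΩ
    exact ⟨_, (Finset.finite_toSet S).image toR, h⟩
  have hcv := poly_convex hΩ
  have hvK : v ∉ convexHull ℝ (K \ {v}) := by
    have := ((hcv.mem_extremePoints_iff_mem_sdiff_convexHull_sdiff).1 hv).2
    intro h
    refine this (convexHull_mono ?_ h)
    refine Set.diff_subset_diff_left ?_
    rw [hKΩ]; exact subset_convexHull _ _
  obtain ⟨f, u, hfu, hf⟩ := geometric_hahn_banach_point_closed (convex_convexHull ℝ _)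
    ((hK.subset Set.diff_subset).isCompact_convexHull (𝕜 := ℝ)).isClosed hvK
  have hf' : ∀ w ∈ K, w ≠ v → f v < f w := fun w hw hwv =>
    hfu.trans (hf w (subset_convexHull _ _ ⟨hw, hwv⟩))
  have hne : ∃ w ∈ K, w ≠ v := by
    by_contra hcon
    push Not at hcon
    have h1 : Ω ⊆ {v} := by
      rw [hKΩ]; exact convexHull_min (fun w hw => hcon w hw) (convex_singleton v)
    obtain ⟨y, hy⟩ := hΩ.2
    have := interior_mono h1 hy
    rw [interior_singleton] at this
    exact this
  obtain ⟨a, sa, fa, da⟩ := poly_nbr hΩ hv f hK hKΩ hf' hne 1 one_ne_zero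
  obtain ⟨b, sb, fb, db⟩ := poly_nbr hΩ hv f hK hKΩ hf' hne (-1) (by norm_num)
  have hnp : dd (a - v) (b - v) ≠ 0 := by
    intro h0
    obtain ⟨y, hy⟩ := hΩ.2
    have hfa : 0 < f (a - v) := by rw [map_sub]; linarith
    have hfb : 0 < f (b - v) := by rw [map_sub]; linarith
    have par : f (a - v) • (b - v) = f (b - v) • (a - v) := by
      rw [clm_form f (a - v), clm_form f (b - v)]
      simp only [dd] at h0
      ext
      · simp only [Prod.smul_fst, smul_eq_mul]; linear_combination (-(f (0, 1))) * h0
      · simp only [Prod.smul_snd, smul_eq_mul]; linear_combination (f (1, 0)) * h0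
    have hz : ∀ c ∈ Ω, dd (a - v) (c - v) = 0 := by
      intro c hc
      have h1 := da c hc
      have h2 := db c hc
      have e : f (a - v) * dd (b - v) (c - v) = f (b - v) * dd (a - v) (c - v) := by
        have p1 := congrArg Prod.fst par
        have p2 := congrArg Prod.snd par
        simp only [Prod.smul_fst, Prod.smul_snd, smul_eq_mul] at p1 p2
        simp only [dd]
        linear_combination (c - v).2 * p1 - (c - v).1 * p2
      have h3 : f (a - v) * dd (b - v) (c - v) ≤ 0 :=
        mul_nonpos_of_nonneg_of_nonpos hfa.le (by linarith)
      have h4 : f (b - v) * dd (a - v) (c - v) = 0 :=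
        le_antisymm (by linarith) (mul_nonneg hfb.le (by linarith))
      exact (mul_eq_zero.1 h4).resolve_left hfb.ne'
    refine frontier_of_support (Ω := Ω) (p := (-(a - v).2, (a - v).1))
      (c := (a - v).2 * v.1 - (a - v).1 * v.2) ?_ ?_ ?_ hy
    · intro h'
      rw [Prod.ext_iff] at h'
      simp only [Prod.fst_zero, Prod.snd_zero, neg_eq_zero] at h'
      have : a - v = 0 := Prod.ext h'.2 h'.1
      rw [this] at hfa; simp at hfa
    · intro z hz'
      have := hz z hz'
      simp only [dd, Prod.fst_sub, Prod.snd_sub] at *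
      linarith
    · have := hz y (interior_subset hy)
      simp only [dd, Prod.fst_sub, Prod.snd_sub] at *
      linarith
  have hD : 0 < dd (a - v) (b - v) := by
    have := da b sb.2.2.1.1
    exact lt_of_le_of_ne (by linarith) hnp.symm
  refine ⟨a, b, ?_, sa, sb, fun c sc => ?_⟩
  · rintro rfl; apply hnp; simp [dd]; ring
  set D := dd (a - v) (b - v) with hDdef
  set α := - dd (b - v) (c - v) / D with hα
  set β := dd (a - v) (c - v) / D with hβ
  have hα0 : 0 ≤ α := div_nonneg (by linarith [db c sc.2.2.1.1]) hD.le
  have hβ0 : 0 ≤ β := div_nonneg (by linarith [da c sc.2.2.1.1]) hD.le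
  have hcab : c - v = α • (a - v) + β • (b - v) := by
    have hDα : D * α = - dd (b - v) (c - v) := by rw [hα]; field_simp
    have hDβ : D * β = dd (a - v) (c - v) := by rw [hβ]; field_simp
    ext
    · apply mul_left_cancel₀ hD.ne'
      simp only [Prod.fst_add, Prod.smul_fst, smul_eq_mul, mul_add, ← mul_assoc, hDα, hDβ]
      rw [hDdef]; simp only [dd]; ring
    · apply mul_left_cancel₀ hD.ne'
      simp only [Prod.snd_add, Prod.smul_snd, smul_eq_mul, mul_add, ← mul_assoc, hDα, hDβ]
      rw [hDdef]; simp only [dd]; ring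
  rcases hβ0.eq_or_lt with h0 | hβp
  · left
    rw [← h0, zero_smul, add_zero] at hcab
    exact ext_ray hv sa.2.2.1 sc.2.2.1 sa.1 sc.1 hα0 hcab
  rcases hα0.eq_or_lt with h0 | hαp
  · right
    rw [← h0, zero_smul, zero_add] at hcab
    exact ext_ray hv sb.2.2.1 sc.2.2.1 sb.1 sc.1 hβ0 hcab
  exfalso
  have hmid : midpoint ℝ v c ∉ interior Ω := by
    have := sc.2.2.2 (midpoint_mem_segment v c)
    exact this.2
  obtain ⟨ψ, hψ⟩ := geometric_hahn_banach_open_point hcv.interior isOpen_interior hmid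
  have hψ' : ∀ x ∈ Ω, ψ x ≤ ψ (midpoint ℝ v c) := by
    intro x hx
    rw [← poly_closure hΩ] at hx
    have : closure (interior Ω) ⊆ {x | ψ x ≤ ψ (midpoint ℝ v c)} :=
      closure_minimal (fun x hx => (hψ x hx).le) (isClosed_le ψ.continuous continuous_const)
    exact this hx
  have hm : ψ (midpoint ℝ v c) = (ψ v + ψ c) / 2 := by
    rw [midpoint_eq_smul_add, map_smul, map_add, smul_eq_mul]
    simp; ring
  have i1 := hψ' v hv.1
  have i2 := hψ' c sc.2.2.1.1
  have i3 := hψ' a sa.2.2.1.1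
  have i4 := hψ' b sb.2.2.1.1
  have hvc : ψ (c - v) = 0 := by rw [map_sub]; linarith
  have hav : ψ (a - v) ≤ 0 := by rw [map_sub]; linarith
  have hbv : ψ (b - v) ≤ 0 := by rw [map_sub]; linarith
  have hs : α * ψ (a - v) + β * ψ (b - v) = 0 := by
    rw [← hvc, hcab, map_add, map_smul, map_smul, smul_eq_mul, smul_eq_mul]
  have za : ψ (a - v) = 0 := by
    by_contra hne
    have := mul_neg_of_pos_of_neg hαp (lt_of_le_of_ne hav hne)
    nlinarith
  have zb : ψ (b - v) = 0 := by
    by_contra hne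
    have := mul_neg_of_pos_of_neg hβp (lt_of_le_of_ne hbv hne)
    nlinarith
  rw [clm_form] at za zb
  have z1 : ψ (1, 0) = 0 := by
    have : D * ψ (1, 0) = 0 := by
      rw [hDdef]; simp only [dd]; linear_combination (b - v).2 * za - (a - v).2 * zb
    exact (mul_eq_zero.1 this).resolve_left hD.ne'
  have z2 : ψ (0, 1) = 0 := by
    have : D * ψ (0, 1) = 0 := by
      rw [hDdef]; simp only [dd]; linear_combination (a - v).1 * zb - (b - v).1 * za
    exact (mul_eq_zero.1 this).resolve_left hD.ne'
  obtain ⟨y, hy⟩ := hΩ.2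
  have := hψ y hy
  rw [clm_form ψ y, clm_form ψ (midpoint ℝ v c), z1, z2] at this
  simp at this

/-! ## Part 6: balancing and the reference potential of an `Ω`-tropical curve -/

lemma balSum_eq {E : Finset Seg} (m : Seg → ℕ) (hE : EdgeSet E)
    (hr : ∀ e ∈ E, RatDir (e.2 - e.1)) (p : ℝ × ℝ) :
    balSum E m p = ∑ e ∈ E, (if e.1 = p then (m e : ℤ) • prim (e.2 - e.1) else 0) -
      ∑ e ∈ E, (if e.2 = p then (m e : ℤ) • prim (e.2 - e.1) else 0) := by
  classical
  unfold balSum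
  rw [Finset.sum_filter, ← Finset.sum_sub_distrib]
  refine Finset.sum_congr rfl fun e he => ?_
  unfold outDir
  have hne := (hE e he).1
  by_cases h1 : e.1 = p
  · have h2 : ¬ e.2 = p := fun h2 => hne (h1.trans h2.symm)
    rw [if_pos (Or.inl h1), if_pos h1, if_pos h1, if_neg h2, sub_zero]
  · by_cases h2 : e.2 = p
    · rw [if_pos (Or.inr h2), if_neg h1, if_neg h1, if_pos h2, zero_sub, ← neg_sub e.2 e.1,
        prim_neg (hr e he), smul_neg]
    · rw [if_neg (by tauto), if_neg h1, if_neg h2, sub_zero]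

lemma ptc_grBal {C : PlaneTropData} (hC : IsPlaneTropCurve C) (p : ℝ × ℝ) :
    grBal C.segs (fun e => (C.msegs e : ℤ)) C.rays (fun r => (C.mrays r : ℤ)) p := by
  classical
  obtain ⟨h1, h2, h3, -, -, -, h4⟩ := hC
  unfold grBal
  by_cases hv : ptcVert C p
  · have := h4 p hv
    unfold ptcBalSum at this
    rw [balSum_eq _ h1 (fun e he => (h2 e he).2), Finset.sum_filter] at this
    convert this using 4
  · unfold ptcVert at hv
    push Not at hv
    rw [Finset.sum_eq_zero (s := C.rays), Finset.sum_eq_zero, Finset.sum_eq_zero]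
    · simp
    · intro e he; rw [if_neg (hv.1 e he).2]
    · intro e he; rw [if_neg (hv.1 e he).1]
    · intro r he; rw [if_neg (hv.2 r he)]

lemma side_symm {Ω : Set (ℝ × ℝ)} {a b : ℝ × ℝ} (h : IsSide Ω a b) : IsSide Ω b a :=
  ⟨h.1.symm, h.2.2.1, h.2.1, by rw [segment_symm]; exact h.2.2.2⟩

lemma side_ratDir {Ω : Set (ℝ × ℝ)} (hΩ : IsLatticePolygon Ω) {a b : ℝ × ℝ} (h : IsSide Ω a b) :
    RatDir (b - a) := by
  obtain ⟨z, rfl⟩ := (poly_ext hΩ).2 a h.2.1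
  obtain ⟨w, rfl⟩ := (poly_ext hΩ).2 b h.2.2.1
  have e : toR w - toR z = toR (w - z) := by simp [toR]
  rw [e]
  refine ratDir_toR ?_
  intro h'
  rw [sub_eq_zero] at h'
  exact h.1 (by rw [h'])

open Classical in
/-- The oriented sides of `Ω` (each side once). -/
noncomputable def sidesOf (X : Finset (ℝ × ℝ)) (Ω : Set (ℝ × ℝ)) : Finset Seg :=
  (X ×ˢ X).filter (fun e => IsSide Ω e.1 e.2 ∧ toLex e.1 < toLex e.2)

lemma sides_sum {Ω : Set (ℝ × ℝ)} (X : Finset (ℝ × ℝ))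
    (hX : ∀ x, x ∈ X ↔ x ∈ Set.extremePoints ℝ Ω) (p : ℝ × ℝ) (hp : p ∈ X)
    (h : ℝ × ℝ → ℤ × ℤ) {a b : ℝ × ℝ} (hab : a ≠ b) (ha : IsSide Ω p a) (hb : IsSide Ω p b)
    (huniq : ∀ c, IsSide Ω p c → c = a ∨ c = b) :
    ∑ e ∈ sidesOf X Ω, (if e.1 = p then h e.2 else 0) +
    ∑ e ∈ sidesOf X Ω, (if e.2 = p then h e.1 else 0) = h a + h b := by
  classical
  unfold sidesOf
  rw [Finset.sum_filter, Finset.sum_filter, Finset.sum_product, Finset.sum_product_right]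
  simp only
  have e1 : ∑ x ∈ X, ∑ y ∈ X, (if IsSide Ω x y ∧ toLex x < toLex y then
      (if x = p then h y else 0) else 0) =
      ∑ y ∈ X, (if IsSide Ω p y ∧ toLex p < toLex y then h y else 0) := by
    rw [Finset.sum_eq_single p]
    · simp
    · intro x _ hx
      refine Finset.sum_eq_zero fun y _ => ?_
      simp [hx]
    · intro h; exact absurd hp h
  have e2 : ∑ y ∈ X, ∑ x ∈ X, (if IsSide Ω x y ∧ toLex x < toLex y then
      (if y = p then h x else 0) else 0) =
      ∑ x ∈ X, (if IsSide Ω x p ∧ toLex x < toLex p then h x else 0) := by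
    rw [Finset.sum_eq_single p]
    · simp
    · intro x _ hx
      refine Finset.sum_eq_zero fun y _ => ?_
      simp [hx]
    · intro h; exact absurd hp h
  rw [e1, e2, ← Finset.sum_add_distrib]
  have e3 : ∀ y ∈ X, (if IsSide Ω p y ∧ toLex p < toLex y then h y else 0) +
      (if IsSide Ω y p ∧ toLex y < toLex p then h y else 0) =
      if y ∈ ({a, b} : Finset (ℝ × ℝ)) then h y else 0 := by
    intro y _
    by_cases hs : IsSide Ω p y
    · have hs' := side_symm hs
      have hm : y ∈ ({a, b} : Finset (ℝ × ℝ)) := by simpa using huniq y hs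
      rw [if_pos hm]
      rcases lt_trichotomy (toLex p) (toLex y) with hl | hl | hl
      · rw [if_pos ⟨hs, hl⟩, if_neg (fun h => lt_asymm hl h.2), add_zero]
      · exact absurd (toLex_inj.1 hl) hs.1
      · rw [if_neg (fun h => lt_asymm hl h.2), if_pos ⟨hs', hl⟩, zero_add]
    · have hs' : ¬ IsSide Ω y p := fun h => hs (side_symm h)
      have hm : y ∉ ({a, b} : Finset (ℝ × ℝ)) := by
        simp only [Finset.mem_insert, Finset.mem_singleton]
        rintro (rfl | rfl)
        · exact hs ha
        · exact hs hb
      rw [if_neg hm, if_neg (fun h => hs h.1), if_neg (fun h => hs' h.1), add_zero]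
  rw [Finset.sum_congr rfl e3, Finset.sum_ite_mem]
  have : X ∩ {a, b} = {a, b} := by
    apply Finset.inter_eq_right.2
    intro x hx
    simp only [Finset.mem_insert, Finset.mem_singleton] at hx
    rw [hX]
    rcases hx with rfl | rfl
    · exact ha.2.2.1
    · exact hb.2.2.1
  rw [this, Finset.sum_pair hab]

theorem omega_potential {Ω : Set (ℝ × ℝ)} (hΩ : IsLatticePolygon Ω) {E : Finset Seg}
    {m : Seg → ℕ} (hE : OmegaTropCurve Ω E m) :
    ∃ F : ℝ × ℝ → ℝ, Continuous F ∧
      (∀ x0 ∈ interior Ω, ¬ IsVert E x0 → ∃ g : ℤ × ℤ, ∃ c : ℝ,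
        ∀ᶠ x in 𝓝 x0, F x = g.1 * x.1 + g.2 * x.2 + c +
          kinks E (fun e => (m e : ℤ)) ∅ (fun _ => 0) x0 x) ∧
      (∀ x0 ∉ Ω, ∃ g : ℤ × ℤ, ∃ c : ℝ, ∀ᶠ x in 𝓝 x0, F x = g.1 * x.1 + g.2 * x.2 + c) := by
  classical
  obtain ⟨hE1, hpl, hm, hr, hsub, hfr, hbal, d, hd, hout, -⟩ := hE
  obtain ⟨X, hX⟩ : ∃ X : Finset (ℝ × ℝ), ∀ x, x ∈ X ↔ x ∈ Set.extremePoints ℝ Ω :=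
    ⟨(poly_ext hΩ).1.toFinset, fun x => by simp⟩
  have hclosed := (poly_compact hΩ).isClosed
  set S := sidesOf X Ω with hS
  have hSside : ∀ e ∈ S, IsSide Ω e.1 e.2 := fun e he => (Finset.mem_filter.1 he).2.1
  have hseg : ∀ e ∈ E, seg e ⊆ gsupp E := fun e he => Set.subset_biUnion_of_mem he
  have hdisj : Disjoint E S := by
    rw [Finset.disjoint_left]
    intro e he he'
    have hs := hSside e he'
    have hmid : midpoint ℝ e.1 e.2 ∈ Set.extremePoints ℝ Ω := by
      rw [← hfr]
      exact ⟨hseg e he (midpoint_mem_segment _ _), hs.2.2.2 (midpoint_mem_segment _ _)⟩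
    have := ((mem_extremePoints.1 hmid).2 e.1 hs.2.1.1 e.2 hs.2.2.1.1 (by
      rw [openSegment_eq_image']
      refine ⟨1/2, by norm_num, ?_⟩
      rw [midpoint_eq_smul_add]
      ext <;> simp <;> ring))
    exact hs.1 (this.1.trans this.2.symm)
  set n : Seg → ℤ := fun e => if e ∈ E then (m e : ℤ) else - d e with hn
  have nE : ∀ e ∈ E, n e = m e := fun e he => if_pos he
  have nS : ∀ e ∈ S, n e = - d e := fun e he => if_neg (Finset.disjoint_right.1 hdisj he)
  have hrat : ∀ e ∈ E ∪ S, RatDir (e.2 - e.1) := by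
    intro e he
    rcases Finset.mem_union.1 he with he | he
    · exact hr e he
    · exact side_ratDir hΩ (hSside e he)
  have hvert : ∀ p, IsVert E p → p ∈ gsupp E := by
    rintro p ⟨e, he, rfl | rfl⟩
    · exact hseg e he (left_mem_segment _ _ _)
    · exact hseg e he (right_mem_segment _ _ _)
  have hgr : ∀ p, grBal (E ∪ S) n ∅ (fun _ => 0) p := by
    intro p
    unfold grBal
    rw [Finset.sum_union hdisj, Finset.sum_union hdisj, Finset.sum_empty, add_zero]
    have eE : ∑ e ∈ E, (if e.1 = p then n e • prim (e.2 - e.1) else 0) -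
        ∑ e ∈ E, (if e.2 = p then n e • prim (e.2 - e.1) else 0) = balSum E m p := by
      rw [balSum_eq m hE1 hr]
      congr 1
      · exact Finset.sum_congr rfl fun e he => by rw [nE e he]
      · exact Finset.sum_congr rfl fun e he => by rw [nE e he]
    have key : balSum E m p + (∑ e ∈ S, (if e.1 = p then n e • prim (e.2 - e.1) else 0) -
        ∑ e ∈ S, (if e.2 = p then n e • prim (e.2 - e.1) else 0)) = 0 := by
      by_cases hp : p ∈ Set.extremePoints ℝ Ω
      · obtain ⟨a, b, hab, sa, sb, hu⟩ := poly_two_sides hΩ hp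
        have hs := sides_sum X hX p ((hX p).2 hp) (fun c => - (d (p, c) • prim (c - p)))
          hab sa sb hu
        rw [hout p hp a b hab sa sb]
        rw [← hS] at hs
        have s1 : ∑ e ∈ S, (if e.1 = p then n e • prim (e.2 - e.1) else 0) =
            ∑ e ∈ S, (if e.1 = p then - (d (p, e.2) • prim (e.2 - p)) else 0) := by
          refine Finset.sum_congr rfl fun e he => ?_
          by_cases h : e.1 = p
          · rw [if_pos h, if_pos h, nS e he, neg_smul, ← h]
          · rw [if_neg h, if_neg h]
        have s2 : ∑ e ∈ S, (if e.2 = p then n e • prim (e.2 - e.1) else 0) =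
            - ∑ e ∈ S, (if e.2 = p then - (d (p, e.1) • prim (e.1 - p)) else 0) := by
          rw [← Finset.sum_neg_distrib]
          refine Finset.sum_congr rfl fun e he => ?_
          by_cases h : e.2 = p
          · have hsd := hSside e he
            rw [if_pos h, if_pos h, nS e he, neg_neg, ← h, (hd _ _ (side_symm hsd)).2,
              ← neg_sub e.2 e.1, prim_neg (side_ratDir hΩ hsd), smul_neg, neg_smul]
          · rw [if_neg h, if_neg h, neg_zero]
        rw [s1, s2, sub_neg_eq_add, hs]
        abel
      · rw [Finset.sum_eq_zero (s := S), Finset.sum_eq_zero (s := S)]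
        · rw [sub_zero, add_zero]
          by_cases hv : IsVert E p
          · refine hbal p hv ?_
            by_contra hcon
            apply hp
            rw [← hfr]
            refine ⟨hvert p hv, ?_⟩
            rw [frontier, hclosed.closure_eq]
            exact ⟨hsub (hvert p hv), hcon⟩
          · unfold IsVert at hv
            push Not at hv
            rw [balSum_eq m hE1 hr, Finset.sum_eq_zero, Finset.sum_eq_zero, sub_zero]
            · intro e he; rw [if_neg (hv e he).2]
            · intro e he; rw [if_neg (hv e he).1]
        · intro e he
          rw [if_neg]; rintro rfl; exact hp (hSside e he).2.2.1
        · intro e he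
          rw [if_neg]; rintro rfl; exact hp (hSside e he).2.1
    rw [← eE] at key
    refine Eq.trans ?_ key
    abel
  obtain ⟨F, hF, M, hloc⟩ := graph_potential (E ∪ S) n ∅ (fun _ => 0) hrat (by simp) hgr
  have hext : ∀ p ∈ Set.extremePoints ℝ Ω, p ∈ frontier Ω := by
    intro p hp; rw [← hfr] at hp; exact hp.2
  refine ⟨F, hF, ?_, ?_⟩
  · intro x0 hx0 hv
    have hnf : x0 ∉ frontier Ω := fun h => h.2 hx0
    have hnv : ∀ e ∈ E ∪ S, e.1 ≠ x0 ∧ e.2 ≠ x0 := by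
      intro e he
      rcases Finset.mem_union.1 he with he | he
      · exact ⟨fun h => hv ⟨e, he, Or.inl h⟩, fun h => hv ⟨e, he, Or.inr h⟩⟩
      · have := hSside e he
        exact ⟨fun h => hnf (h ▸ hext _ this.2.1), fun h => hnf (h ▸ hext _ this.2.2.1)⟩
    obtain ⟨g, -, -, c, hev⟩ := hloc x0 hnv (by simp)
    refine ⟨g, c, ?_⟩
    filter_upwards [hev] with x hx
    rw [hx]
    congr 1
    unfold kinks
    rw [Finset.sum_union hdisj, Finset.sum_eq_zero (s := S), add_zero]
    · congr 1
      refine Finset.sum_congr rfl fun e he => ?_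
      rw [nE e he]
    · intro e he
      rw [if_neg]
      intro h
      exact hnf ((hSside e he).2.2.2 h)
  · intro x0 hx0
    have hns : ∀ e ∈ E ∪ S, x0 ∉ seg e := by
      intro e he hx
      rcases Finset.mem_union.1 he with he | he
      · exact hx0 (hsub (hseg e he hx))
      · have := (hSside e he).2.2.2 hx
        rw [frontier, hclosed.closure_eq] at this
        exact hx0 this.1
    have hnv : ∀ e ∈ E ∪ S, e.1 ≠ x0 ∧ e.2 ≠ x0 := by
      intro e he
      exact ⟨fun h => hns e he (h ▸ left_mem_segment _ _ _),
        fun h => hns e he (h ▸ right_mem_segment _ _ _)⟩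
    obtain ⟨g, -, -, c, hev⟩ := hloc x0 hnv (by simp)
    refine ⟨g, c, ?_⟩
    filter_upwards [hev] with x hx
    rw [hx]
    unfold kinks
    rw [Finset.sum_eq_zero (s := E ∪ S), Finset.sum_empty]
    · simp
    · intro e he
      rw [if_neg (hns e he)]

/-! ## Part 7: local forms, corner loci -/

/-- Two affine functions which agree near a point are equal. -/
lemma affine_unique {g g' : ℝ × ℝ} {c c' : ℝ} {x0 : ℝ × ℝ}
    (h : ∀ᶠ x in 𝓝 x0, g.1 * x.1 + g.2 * x.2 + c = g'.1 * x.1 + g'.2 * x.2 + c') :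
    g = g' ∧ c = c' := by
  have key : ∀ u : ℝ × ℝ, ∃ t : ℝ, 0 < t ∧
      g.1 * (x0 + t • u).1 + g.2 * (x0 + t • u).2 + c =
      g'.1 * (x0 + t • u).1 + g'.2 * (x0 + t • u).2 + c' := by
    intro u
    have hc : ContinuousAt (fun t : ℝ => x0 + t • u) 0 := by fun_prop
    have h2 : ∀ᶠ t in 𝓝 (0 : ℝ), g.1 * (x0 + t • u).1 + g.2 * (x0 + t • u).2 + c =
      g'.1 * (x0 + t • u).1 + g'.2 * (x0 + t • u).2 + c' := by
      apply hc.eventually (p := fun x => g.1 * x.1 + g.2 * x.2 + c = g'.1 * x.1 + g'.2 * x.2 + c')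
      simpa using h
    have h3 := h2.filter_mono (nhdsWithin_le_nhds (s := Set.Ioi 0))
    obtain ⟨t, ht, ht0⟩ := (h3.and self_mem_nhdsWithin).exists
    exact ⟨t, ht0, ht⟩
  have h0 := h.self_of_nhds
  obtain ⟨t, ht, e1⟩ := key (1, 0)
  obtain ⟨s, hs, e2⟩ := key (0, 1)
  simp only [Prod.fst_add, Prod.snd_add, Prod.smul_fst, Prod.smul_snd, smul_eq_mul, mul_one,
    mul_zero, add_zero] at e1 e2
  have f1 : g.1 = g'.1 := by
    have : t * (g.1 - g'.1) = 0 := by linarith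
    have := (mul_eq_zero.1 this).resolve_left ht.ne'
    linarith
  have f2 : g.2 = g'.2 := by
    have : s * (g.2 - g'.2) = 0 := by linarith
    have := (mul_eq_zero.1 this).resolve_left hs.ne'
    linarith
  refine ⟨Prod.ext f1 f2, ?_⟩
  rw [f1, f2] at h0
  linarith

theorem affine_outside {Ω : Set (ℝ × ℝ)} (hΩ : IsLatticePolygon Ω) {F : ℝ × ℝ → ℝ}
    (hF : Continuous F)
    (h : ∀ x0 ∉ Ω, ∃ g : ℤ × ℤ, ∃ c : ℝ, ∀ᶠ x in 𝓝 x0, F x = g.1 * x.1 + g.2 * x.2 + c) :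
    ∃ g : ℤ × ℤ, ∃ c : ℝ, ∀ x ∉ interior Ω, F x = g.1 * x.1 + g.2 * x.2 + c := by
  obtain ⟨R, hR⟩ := (poly_compact hΩ).isBounded.exists_norm_le
  have HA : ∀ U : Set (ℝ × ℝ), IsOpen U → Convex ℝ U → (∀ x ∈ U, x ∉ Ω) → ∀ x0 ∈ U,
      ∃ g : ℤ × ℤ, ∃ c : ℝ, ∀ x ∈ U, F x = g.1 * x.1 + g.2 * x.2 + c := by
    intro U hU hUc hd x0 hx0
    obtain ⟨g, c, hg⟩ := h x0 (hd x0 hx0)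
    refine ⟨g, c, ?_⟩
    refine affine_of_local (g := ((g.1 : ℝ), (g.2 : ℝ))) hU hUc Set.finite_empty
      hF.continuousOn ?_ hx0 hg
    intro x hx _
    obtain ⟨g', c', hg'⟩ := h x (hd x hx)
    exact ⟨_, hg', g'.1, g'.2, c', fun y hy => hy⟩
  have HU : ∀ U V : Set (ℝ × ℝ), IsOpen U → IsOpen V → (U ∩ V).Nonempty →
      ∀ g g' : ℤ × ℤ, ∀ c c' : ℝ, (∀ x ∈ U, F x = g.1 * x.1 + g.2 * x.2 + c) →
      (∀ x ∈ V, F x = g'.1 * x.1 + g'.2 * x.2 + c') → g = g' ∧ c = c' := by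
    rintro U V hU hV ⟨x0, hx0⟩ g g' c c' h1 h2
    have := affine_unique (g := ((g.1 : ℝ), (g.2 : ℝ))) (g' := ((g'.1 : ℝ), (g'.2 : ℝ)))
      (c := c) (c' := c') (x0 := x0) (by
        filter_upwards [(hU.inter hV).mem_nhds hx0] with x hx
        rw [← h1 x hx.1, ← h2 x hx.2])
    refine ⟨?_, this.2⟩
    have e1 : (g.1 : ℝ) = g'.1 := congrArg Prod.fst this.1
    have e2 : (g.2 : ℝ) = g'.2 := congrArg Prod.snd this.1
    exact Prod.ext (by exact_mod_cast e1) (by exact_mod_cast e2)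
  have HP : ∀ p q u : ℝ, IsOpen {x : ℝ × ℝ | p * x.1 + q * x.2 < u} ∧
      Convex ℝ {x : ℝ × ℝ | p * x.1 + q * x.2 < u} := by
    intro p q u
    refine ⟨isOpen_lt (by fun_prop) continuous_const, ?_⟩
    intro x hx y hy s t hs ht hst
    simp only [Set.mem_ofPred_eq, Prod.fst_add, Prod.snd_add, Prod.smul_fst, Prod.smul_snd,
      smul_eq_mul] at *
    have : s = 1 - t := by linarith
    subst this
    rcases ht.eq_or_lt with h' | h'
    · subst h'; linarith
    · have h1 := mul_le_mul_of_nonneg_left hx.le hs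
      have h2 := mul_lt_mul_of_pos_left hy h'
      linarith
  set U1 := {x : ℝ × ℝ | (-1) * x.1 + 0 * x.2 < -R} with hU1
  set U2 := {x : ℝ × ℝ | 0 * x.1 + (-1) * x.2 < -R} with hU2
  have d1 : ∀ x ∈ U1, x ∉ Ω := by
    intro x hx hxΩ
    have := (norm_fst_le x).trans (hR x hxΩ)
    have h2 := le_abs_self x.1
    rw [Real.norm_eq_abs] at this
    simp only [hU1, Set.mem_ofPred_eq] at hx
    linarith
  have d2 : ∀ x ∈ U2, x ∉ Ω := by
    intro x hx hxΩ
    have := (norm_snd_le x).trans (hR x hxΩ)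
    have h2 := le_abs_self x.2
    rw [Real.norm_eq_abs] at this
    simp only [hU2, Set.mem_ofPred_eq] at hx
    linarith
  have m1 : ((R + 1, R + 1) : ℝ × ℝ) ∈ U1 := by simp [hU1]
  have m2 : ((R + 1, R + 1) : ℝ × ℝ) ∈ U2 := by simp [hU2]
  obtain ⟨g, c, hg⟩ := HA U1 (HP _ _ _).1 (HP _ _ _).2 d1 _ m1
  obtain ⟨g2, c2, hg2⟩ := HA U2 (HP _ _ _).1 (HP _ _ _).2 d2 _ m2
  obtain ⟨rfl, rfl⟩ := HU U1 U2 (HP _ _ _).1 (HP _ _ _).1 ⟨_, m1, m2⟩ g g2 c c2 hg hg2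
  have hout : ∀ x ∉ Ω, F x = g.1 * x.1 + g.2 * x.2 + c := by
    intro x hx
    obtain ⟨f, u, hfx, hf⟩ := geometric_hahn_banach_point_closed (poly_convex hΩ)
      (poly_compact hΩ).isClosed hx
    set p := f (1, 0) with hp
    set q := f (0, 1) with hq
    have hform : ∀ y, f y = p * y.1 + q * y.2 := clm_form f
    set H := {x : ℝ × ℝ | p * x.1 + q * x.2 < u} with hH
    have dH : ∀ x ∈ H, x ∉ Ω := by
      intro x hx hxΩ
      have := hf x hxΩ
      rw [hform] at this
      simp only [hH, Set.mem_ofPred_eq] at hx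
      linarith
    have mx : x ∈ H := by
      have := hfx
      rw [hform] at this
      exact this
    obtain ⟨g', c', hg'⟩ := HA H (HP _ _ _).1 (HP _ _ _).2 dH x mx
    have : g = g' ∧ c = c' := by
      by_cases hq0 : q = 0
      · by_cases hp0 : p = 0
        · exfalso
          obtain ⟨y, hy⟩ := hΩ.2
          have := hf y (interior_subset hy)
          rw [hform] at this hfx
          rw [hp0, hq0] at this hfx
          linarith
        · refine HU U2 H (HP _ _ _).1 (HP _ _ _).1 ⟨((u - 1) / p, R + 1), ?_, ?_⟩ g g' c c' hg2 hg'
          · simp [hU2]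
          · simp [hH, hq0]; field_simp; linarith
      · refine HU U1 H (HP _ _ _).1 (HP _ _ _).1
          ⟨(R + 1, (u - 1 - p * (R + 1)) / q), ?_, ?_⟩ g g' c c' hg hg'
        · simp [hU1]
        · simp only [hH, Set.mem_ofPred_eq]
          rw [mul_div_cancel₀ _ hq0]; linarith
    rw [hg' x mx, this.1, this.2]
  refine ⟨g, c, fun x hx => ?_⟩
  have hx' : x ∈ closure Ωᶜ := by rw [closure_compl]; exact hx
  have hcl : IsClosed {x : ℝ × ℝ | F x = g.1 * x.1 + g.2 * x.2 + c} :=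
    isClosed_eq hF (by fun_prop)
  exact closure_minimal (fun y hy => hout y hy) hcl hx'

/-- The kinks of a plane tropical curve. -/
noncomputable def kC (C : PlaneTropData) (x0 x : ℝ × ℝ) : ℝ :=
  kinks C.segs (fun e => (C.msegs e : ℤ)) C.rays (fun r => (C.mrays r : ℤ)) x0 x

lemma kinks_seg {T : Finset Seg} {n : Seg → ℤ} {R : Finset ((ℝ × ℝ) × (ℤ × ℤ))}
    {k : (ℝ × ℝ) × (ℤ × ℤ) → ℤ} {x0 : ℝ × ℝ} {e : Seg} (he : e ∈ T) (hx : x0 ∈ seg e)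
    (h1 : ∀ e' ∈ T, e' ≠ e → x0 ∉ seg e') (h2 : ∀ r ∈ R, x0 ∉ raySet r) (x : ℝ × ℝ) :
    kinks T n R k x0 x = n e * min 0 (dt (prim (e.2 - e.1)) (x - x0)) := by
  unfold kinks
  rw [Finset.sum_eq_single e, Finset.sum_eq_zero, if_pos hx, add_zero]
  · intro r hr; rw [if_neg (h2 r hr)]
  · intro e' he' hne; rw [if_neg (h1 e' he' hne)]
  · intro h; exact absurd he h

lemma kinks_ray {T : Finset Seg} {n : Seg → ℤ} {R : Finset ((ℝ × ℝ) × (ℤ × ℤ))}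
    {k : (ℝ × ℝ) × (ℤ × ℤ) → ℤ} {x0 : ℝ × ℝ} {r : (ℝ × ℝ) × (ℤ × ℤ)} (hr : r ∈ R)
    (hx : x0 ∈ raySet r)
    (h1 : ∀ e' ∈ T, x0 ∉ seg e') (h2 : ∀ r' ∈ R, r' ≠ r → x0 ∉ raySet r') (x : ℝ × ℝ) :
    kinks T n R k x0 x = k r * min 0 (dt r.2 (x - x0)) := by
  unfold kinks
  rw [Finset.sum_eq_single (s := R) r, Finset.sum_eq_zero, if_pos hx, zero_add]
  · intro e he; rw [if_neg (h1 e he)]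
  · intro e' he' hne; rw [if_neg (h2 e' he' hne)]
  · intro h; exact absurd hr h

lemma kinks_none {T : Finset Seg} {n : Seg → ℤ} {R : Finset ((ℝ × ℝ) × (ℤ × ℤ))}
    {k : (ℝ × ℝ) × (ℤ × ℤ) → ℤ} {x0 : ℝ × ℝ} 
    (h1 : ∀ e' ∈ T, x0 ∉ seg e') (h2 : ∀ r' ∈ R, x0 ∉ raySet r') (x : ℝ × ℝ) :
    kinks T n R k x0 x = 0 := by
  unfold kinks
  rw [Finset.sum_eq_zero, Finset.sum_eq_zero, add_zero]
  · intro e he; rw [if_neg (h2 e he)]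
  · intro e he; rw [if_neg (h1 e he)]

lemma kC_seg {C : PlaneTropData} (hC : IsPlaneTropCurve C) {e : Seg} (he : e ∈ C.segs)
    {x0 : ℝ × ℝ} (hx : x0 ∈ seg e) (h1 : x0 ≠ e.1) (h2 : x0 ≠ e.2) (x : ℝ × ℝ) :
    kC C x0 x = C.msegs e * min 0 (dt (prim (e.2 - e.1)) (x - x0)) := by
  obtain ⟨-, -, -, p1, p2, p3, -⟩ := hC
  have := kinks_seg (n := fun e => (C.msegs e : ℤ)) (k := fun r => (C.mrays r : ℤ)) he hx
    (R := C.rays) (fun e' he' hne hx' => by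
      rcases (p1 e he e' he' hne.symm ⟨hx, hx'⟩).1 with h | h
      · exact h1 h
      · exact h2 h) (fun r hr hx' => by
      rcases (p2 e he r hr ⟨hx, hx'⟩).1 with h | h
      · exact h1 h
      · exact h2 h) x
  unfold kC
  rw [this]; simp

lemma kC_ray {C : PlaneTropData} (hC : IsPlaneTropCurve C) {r : (ℝ × ℝ) × (ℤ × ℤ)}
    (hr : r ∈ C.rays)
    {x0 : ℝ × ℝ} (hx : x0 ∈ raySet r) (h1 : x0 ≠ r.1) (x : ℝ × ℝ) :
    kC C x0 x = C.mrays r * min 0 (dt r.2 (x - x0)) := by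
  obtain ⟨-, -, -, p1, p2, p3, -⟩ := hC
  have := kinks_ray (n := fun e => (C.msegs e : ℤ)) (k := fun r => (C.mrays r : ℤ)) hr hx
    (T := C.segs) (fun e he hx' => h1 (p2 e he r hr ⟨hx', hx⟩).2)
    (fun r' hr' hne hx' => h1 (p3 r hr r' hr' hne.symm ⟨hx, hx'⟩).1) x
  unfold kC
  rw [this]; simp

lemma not_mem_ptcSupp {C : PlaneTropData} {x0 : ℝ × ℝ} : x0 ∉ ptcSupp C ↔
    (∀ e ∈ C.segs, x0 ∉ seg e) ∧ ∀ r ∈ C.rays, x0 ∉ raySet r := by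
  unfold ptcSupp
  simp

lemma mem_ptcSupp {C : PlaneTropData} {x0 : ℝ × ℝ} : x0 ∈ ptcSupp C ↔
    (∃ e ∈ C.segs, x0 ∈ seg e) ∨ ∃ r ∈ C.rays, x0 ∈ raySet r := by
  unfold ptcSupp
  simp

lemma kC_none {C : PlaneTropData} {x0 : ℝ × ℝ} (hx : x0 ∉ ptcSupp C) (x : ℝ × ℝ) :
    kC C x0 x = 0 := by
  rw [not_mem_ptcSupp] at hx
  exact kinks_none hx.1 hx.2 x

/-- `F` has an affine-plus-kink form at `x0`. -/
def Kink (F : ℝ × ℝ → ℝ) (x0 : ℝ × ℝ) (l : ℤ × ℤ) (m : ℕ) : Prop :=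
  ∃ g : ℝ × ℝ, ∃ c : ℝ, ∀ᶠ x in 𝓝 x0,
    F x = g.1 * x.1 + g.2 * x.2 + c + m * min 0 (dt l (x - x0))

lemma kink_of_weight {F : ℝ × ℝ → ℝ} {x0 : ℝ × ℝ} {l : ℤ × ℤ} {m : ℕ}
    (h : EdgeWeightIs F x0 l m) (hx : x0 ∈ cornerLocus F) : Kink F x0 l m := by
  obtain ⟨U, hU, g₁, g₂, c₁, c₂, hg, hF⟩ := h
  have e1 : g₁.1 = g₂.1 - m * l.2 := by
    have := congrArg Prod.fst hg; simp [toR] at this; linarith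
  have e2 : g₁.2 = g₂.2 + m * l.1 := by
    have := congrArg Prod.snd hg; simp [toR] at this; linarith
  set L1 : ℝ × ℝ → ℝ := fun y => g₁.1 * y.1 + g₁.2 * y.2 + c₁ with hL1
  set L2 : ℝ × ℝ → ℝ := fun y => g₂.1 * y.1 + g₂.2 * y.2 + c₂ with hL2
  have k1 : ContinuousAt L1 x0 := by rw [hL1]; fun_prop
  have k2 : ContinuousAt L2 x0 := by rw [hL2]; fun_prop
  rcases lt_trichotomy (L1 x0) (L2 x0) with hlt | heq | hlt
  · exfalso; apply hx
    have := (k1.eventually_lt k2 hlt)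
    refine ⟨_, inter_mem hU this, g₁.1, g₁.2, c₁, fun y hy => ?_⟩
    rw [hF y hy.1]; exact min_eq_left (le_of_lt hy.2)
  · refine ⟨g₂, c₂, ?_⟩
    filter_upwards [hU] with y hy
    rw [hF y hy]
    have : g₁.1 * y.1 + g₁.2 * y.2 + c₁ =
        g₂.1 * y.1 + g₂.2 * y.2 + c₂ + m * dt l (y - x0) := by
      simp only [hL1, hL2] at heq
      simp only [dt, Prod.fst_sub, Prod.snd_sub]
      rw [e1, e2] at heq ⊢
      linarith
    rw [this, mul_min_of_nonneg _ _ (Nat.cast_nonneg m), mul_zero, ← min_add_add_left, add_zero,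
      min_comm]
  · exfalso; apply hx
    have := (k2.eventually_lt k1 hlt)
    refine ⟨_, inter_mem hU this, g₂.1, g₂.2, c₂, fun y hy => ?_⟩
    rw [hF y hy.1]; exact min_eq_right (le_of_lt hy.2)

lemma weight_of_kink {F : ℝ × ℝ → ℝ} {x0 : ℝ × ℝ} {l : ℤ × ℤ} {m : ℕ}
    (h : Kink F x0 l m) : EdgeWeightIs F x0 l m := by
  obtain ⟨g, c, hg⟩ := h
  refine ⟨_, hg, g + (m : ℝ) • toR (-l.2, l.1), g, c - m * dt l x0, c, by abel, fun y hy => ?_⟩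
  have hy : F y = g.1 * y.1 + g.2 * y.2 + c + m * min 0 (dt l (y - x0)) := hy
  rw [hy, mul_min_of_nonneg _ _ (Nat.cast_nonneg m), mul_zero, ← min_add_add_left, add_zero,
      min_comm]
  congr 1
  simp [dt, toR]; ring

lemma kink_corner {F : ℝ × ℝ → ℝ} {x0 : ℝ × ℝ} {l : ℤ × ℤ} {m : ℕ} (hl : l ≠ 0) (hm : 0 < m)
    (h : Kink F x0 l m) : x0 ∈ cornerLocus F := by
  rintro ⟨U, hU, c₁, c₂, c₀, hF⟩
  obtain ⟨g, c, hg⟩ := h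
  set u : ℝ × ℝ := (-(l.2 : ℝ), (l.1 : ℝ)) with hu
  have hq : 0 < (l.1 : ℝ) * l.1 + l.2 * l.2 := by
    have : l.1 ≠ 0 ∨ l.2 ≠ 0 := by
      by_contra hcon; push Not at hcon; exact hl (Prod.ext hcon.1 hcon.2)
    rcases this with h | h
    · have : (l.1 : ℝ) ≠ 0 := by exact_mod_cast h
      nlinarith [mul_self_pos.2 this, mul_self_nonneg (l.2 : ℝ)]
    · have : (l.2 : ℝ) ≠ 0 := by exact_mod_cast h
      nlinarith [mul_self_pos.2 this, mul_self_nonneg (l.1 : ℝ)]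
  have hev : ∀ᶠ x in 𝓝 x0, c₁ * x.1 + c₂ * x.2 + c₀ =
      g.1 * x.1 + g.2 * x.2 + c + m * min 0 (dt l (x - x0)) := by
    filter_upwards [hU, hg] with x h1 h2
    rw [← hF x h1, h2]
  have hc1 : ContinuousAt (fun t : ℝ => x0 + t • u) 0 := by fun_prop
  have hc2 : ContinuousAt (fun t : ℝ => x0 - t • u) 0 := by fun_prop
  have a1 := hc1.eventually (p := fun x => c₁ * x.1 + c₂ * x.2 + c₀ =
      g.1 * x.1 + g.2 * x.2 + c + m * min 0 (dt l (x - x0))) (by simpa using hev)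
  have a2 := hc2.eventually (p := fun x => c₁ * x.1 + c₂ * x.2 + c₀ =
      g.1 * x.1 + g.2 * x.2 + c + m * min 0 (dt l (x - x0))) (by simpa using hev)
  have a3 := (a1.and a2).filter_mono (nhdsWithin_le_nhds (s := Set.Ioi 0))
  obtain ⟨t, ⟨b1, b2⟩, ht⟩ := (a3.and self_mem_nhdsWithin).exists
  have b0 := hev.self_of_nhds
  have ht : 0 < t := ht
  have q1 : dt l (x0 + t • u - x0) = t * ((l.1 : ℝ) * l.1 + l.2 * l.2) := by
    simp [dt, hu]; ring
  have q2 : dt l (x0 - t • u - x0) = - (t * ((l.1 : ℝ) * l.1 + l.2 * l.2)) := by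
    simp [dt, hu]; ring
  have hpos := mul_pos ht hq
  rw [q1, min_eq_left hpos.le] at b1
  rw [q2, min_eq_right (by linarith)] at b2
  rw [sub_self, show dt l 0 = 0 by simp [dt]] at b0
  simp only [Prod.fst_add, Prod.snd_add, Prod.fst_sub, Prod.snd_sub, Prod.smul_fst, Prod.smul_snd,
    smul_eq_mul, min_self, mul_zero, add_zero] at b0 b1 b2
  have hmp : 0 < (m : ℝ) * (t * ((l.1 : ℝ) * l.1 + l.2 * l.2)) :=
    mul_pos (by exact_mod_cast hm) hpos
  linarith

/-! ## Part 8: representing curves as corner loci -/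

/-- Local form of a function whose corner locus is `C`. -/
def HasForm (C : PlaneTropData) (F : ℝ × ℝ → ℝ) : Prop :=
  ∀ x0, ¬ ptcVert C x0 → ∃ g : ℝ × ℝ, ∃ c : ℝ, ∀ᶠ x in 𝓝 x0,
    F x = g.1 * x.1 + g.2 * x.2 + c + kC C x0 x

lemma form_of_rep {C : PlaneTropData} (hC : IsPlaneTropCurve C) {F : ℝ × ℝ → ℝ}
    (h : RepresentsCornerLocus F C) : HasForm C F := by
  intro x0 hv
  obtain ⟨hs, h1, h2⟩ := h
  unfold ptcVert at hv
  push Not at hv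
  by_cases hx : x0 ∈ ptcSupp C
  · have hco : x0 ∈ cornerLocus F := hs ▸ hx
    rcases mem_ptcSupp.1 hx with ⟨e, he, hxe⟩ | ⟨r, hr, hxr⟩
    · have n1 := (hv.1 e he).1.symm
      have n2 := (hv.1 e he).2.symm
      obtain ⟨g, c, hg⟩ := kink_of_weight (h1 e he x0 hxe n1 n2) hco
      refine ⟨g, c, ?_⟩
      filter_upwards [hg] with x hx
      rw [hx, kC_seg hC he hxe n1 n2]
    · have n1 := (hv.2 r hr).symm
      obtain ⟨g, c, hg⟩ := kink_of_weight (h2 r hr x0 hxr n1) hco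
      refine ⟨g, c, ?_⟩
      filter_upwards [hg] with x hx
      rw [hx, kC_ray hC hr hxr n1]
  · have hco : x0 ∉ cornerLocus F := hs ▸ hx
    obtain ⟨U, hU, c1, c2, c3, hF⟩ := not_not.1 hco
    refine ⟨(c1, c2), c3, ?_⟩
    filter_upwards [hU] with x hxU
    rw [hF x hxU, kC_none hx, add_zero]

lemma corner_limit {F : ℝ × ℝ → ℝ} {v u : ℝ × ℝ}
    (h : ∀ s : ℝ, 0 < s → s < 1 → v + s • u ∈ cornerLocus F) : v ∈ cornerLocus F := by
  rintro ⟨U, hU, c1, c2, c3, hF⟩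
  have hev : ∀ᶠ x in 𝓝 v, ∀ᶠ y in 𝓝 x, y ∈ U := eventually_eventually_nhds.2 hU
  have hc : ContinuousAt (fun t : ℝ => v + t • u) 0 := by fun_prop
  have h2 := hc.eventually (p := fun x => ∀ᶠ y in 𝓝 x, y ∈ U) (by simpa using hev)
  have h3 := h2.and (Iio_mem_nhds (show (0 : ℝ) < 1 by norm_num))
  have h4 := h3.filter_mono (nhdsWithin_le_nhds (s := Set.Ioi 0))
  obtain ⟨t, ⟨a1, a2⟩, a3⟩ := (h4.and self_mem_nhdsWithin).exists
  exact h t a3 a2 ⟨U, a1, c1, c2, c3, hF⟩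

lemma seg_not_vert {C : PlaneTropData} (hC : IsPlaneTropCurve C) {e : Seg} (he : e ∈ C.segs)
    {x0 : ℝ × ℝ} (hx : x0 ∈ seg e) (h1 : x0 ≠ e.1) (h2 : x0 ≠ e.2) : ¬ ptcVert C x0 := by
  obtain ⟨-, -, -, p1, p2, p3, -⟩ := hC
  rintro (⟨e', he', h⟩ | ⟨r, hr, h⟩)
  · have hx' : x0 ∈ seg e' := by
      rcases h with rfl | rfl
      · exact left_mem_segment _ _ _
      · exact right_mem_segment _ _ _
    by_cases hne : e = e'
    · subst hne
      rcases h with h | h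
      · exact h1 h.symm
      · exact h2 h.symm
    · rcases (p1 e he e' he' hne ⟨hx, hx'⟩).1 with h | h
      · exact h1 h
      · exact h2 h
  · have hx' : x0 ∈ raySet r := ⟨0, le_rfl, by rw [h]; simp⟩
    rcases (p2 e he r hr ⟨hx, hx'⟩).1 with h | h
    · exact h1 h
    · exact h2 h

lemma ray_not_vert {C : PlaneTropData} (hC : IsPlaneTropCurve C) {r : (ℝ × ℝ) × (ℤ × ℤ)}
    (hr : r ∈ C.rays) {x0 : ℝ × ℝ} (hx : x0 ∈ raySet r) (h1 : x0 ≠ r.1) : ¬ ptcVert C x0 := by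
  obtain ⟨-, -, -, p1, p2, p3, -⟩ := hC
  rintro (⟨e', he', h⟩ | ⟨r', hr', h⟩)
  · have hx' : x0 ∈ seg e' := by
      rcases h with rfl | rfl
      · exact left_mem_segment _ _ _
      · exact right_mem_segment _ _ _
    exact h1 (p2 e' he' r hr ⟨hx', hx⟩).2
  · have hx' : x0 ∈ raySet r' := ⟨0, le_rfl, by rw [h]; simp⟩
    by_cases hne : r = r'
    · subst hne; exact h1 h.symm
    · exact h1 (p3 r hr r' hr' hne ⟨hx, hx'⟩).1

lemma vert_supp {C : PlaneTropData} {x0 : ℝ × ℝ} (h : ptcVert C x0) : x0 ∈ ptcSupp C := by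
  rw [mem_ptcSupp]
  rcases h with ⟨e', he', h⟩ | ⟨r, hr, h⟩
  · left
    refine ⟨e', he', ?_⟩
    rcases h with rfl | rfl
    · exact left_mem_segment _ _ _
    · exact right_mem_segment _ _ _
  · exact Or.inr ⟨r, hr, 0, le_rfl, by rw [h]; simp⟩

lemma rep_of_form {C : PlaneTropData} (hC : IsPlaneTropCurve C) {F : ℝ × ℝ → ℝ}
    (h : HasForm C F) : RepresentsCornerLocus F C := by
  have k1 : ∀ e ∈ C.segs, ∀ x ∈ seg e, x ≠ e.1 → x ≠ e.2 →
      Kink F x (prim (e.2 - e.1)) (C.msegs e) := by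
    intro e he x hx n1 n2
    obtain ⟨g, c, hg⟩ := h x (seg_not_vert hC he hx n1 n2)
    refine ⟨g, c, ?_⟩
    filter_upwards [hg] with y hy
    rw [hy, kC_seg hC he hx n1 n2]
  have k2 : ∀ r ∈ C.rays, ∀ x ∈ raySet r, x ≠ r.1 → Kink F x r.2 (C.mrays r) := by
    intro r hr x hx n1
    obtain ⟨g, c, hg⟩ := h x (ray_not_vert hC hr hx n1)
    refine ⟨g, c, ?_⟩
    filter_upwards [hg] with y hy
    rw [hy, kC_ray hC hr hx n1]
  have c1 : ∀ e ∈ C.segs, ∀ x ∈ seg e, x ≠ e.1 → x ≠ e.2 → x ∈ cornerLocus F := by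
    intro e he x hx n1 n2
    have := hC.2.1 e he
    exact kink_corner (prim_ne_zero (prim_spec this.2).1) this.1 (k1 e he x hx n1 n2)
  have c2 : ∀ r ∈ C.rays, ∀ x ∈ raySet r, x ≠ r.1 → x ∈ cornerLocus F := by
    intro r hr x hx n1
    have := hC.2.2.1 r hr
    exact kink_corner (prim_ne_zero this.2) this.1 (k2 r hr x hx n1)
  refine ⟨?_, fun e he x hx n1 n2 => weight_of_kink (k1 e he x hx n1 n2),
    fun r hr x hx n1 => weight_of_kink (k2 r hr x hx n1)⟩
  ext x
  constructor
  · intro hx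
    rcases mem_ptcSupp.1 hx with ⟨e, he, hxe⟩ | ⟨r, hr, hxr⟩
    · have hne := (hC.1 e he).1
      have hd : e.2 - e.1 ≠ 0 := sub_ne_zero.2 hne.symm
      have hmid : ∀ s : ℝ, 0 < s → s < 1 → e.1 + s • (e.2 - e.1) ∈ cornerLocus F := by
        intro s hs hs1
        refine c1 e he _ ?_ ?_ ?_
        · rw [seg, segment_eq_image']; exact ⟨s, ⟨hs.le, hs1.le⟩, rfl⟩
        · intro h'
          have : s • (e.2 - e.1) = 0 := by simpa using h'
          rcases smul_eq_zero.1 this with h | h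
          · exact hs.ne' h
          · exact hd h
        · intro h'
          have : (1 - s) • (e.2 - e.1) = 0 := by
            rw [sub_smul, one_smul, sub_eq_zero, sub_eq_iff_eq_add', h']
          rcases smul_eq_zero.1 this with h | h
          · linarith
          · exact hd h
      by_cases n1 : x = e.1
      · rw [n1]; exact corner_limit hmid
      by_cases n2 : x = e.2
      · rw [n2]
        refine corner_limit (u := e.1 - e.2) fun s hs hs1 => ?_
        have := hmid (1 - s) (by linarith) (by linarith)
        convert this using 1
        ext <;> simp <;> ring
      · exact c1 e he x hxe n1 n2
    · by_cases n1 : x = r.1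
      · rw [n1]
        refine corner_limit (u := toR r.2) fun s hs hs1 => ?_
        refine c2 r hr _ ⟨s, hs.le, rfl⟩ ?_
        intro h'
        have : s • toR r.2 = 0 := by simpa using h'
        rcases smul_eq_zero.1 this with h | h
        · exact hs.ne' h
        · exact toR_ne_zero (prim_ne_zero (hC.2.2.1 r hr).2) h
      · exact c2 r hr x hxr n1
  · intro hx
    by_contra hn
    apply hx
    obtain ⟨g, c, hg⟩ := h x (fun hv => hn (vert_supp hv))
    refine ⟨_, hg, g.1, g.2, c, fun y hy => ?_⟩
    have hy : F y = g.1 * y.1 + g.2 * y.2 + c + kC C x y := hy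
    rw [hy, kC_none hn, add_zero]

lemma sub_prim {e : Seg} {p : ℝ × ℝ} {l : ℤ × ℤ} (hl : Int.gcd l.1 l.2 = 1) (hne : e.1 ≠ e.2)
    (h1 : ∃ s : ℝ, e.1 = p + s • toR l) (h2 : ∃ s : ℝ, e.2 = p + s • toR l) :
    prim (e.2 - e.1) = l ∨ prim (e.2 - e.1) = -l := by
  obtain ⟨s, hs⟩ := h1
  obtain ⟨t, ht⟩ := h2
  have hd : e.2 - e.1 = (t - s) • toR l := by rw [hs, ht, sub_smul]; abel
  rcases lt_trichotomy s t with h | h | h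
  · left; exact prim_eq ⟨hl, t - s, by linarith, hd⟩
  · exfalso; apply hne; rw [hs, ht, h]
  · right
    refine prim_eq ⟨by simpa using hl, s - t, by linarith, ?_⟩
    rw [hd, toR_neg, smul_neg, ← neg_smul, neg_sub]

lemma kinks_diff {Ω : Set (ℝ × ℝ)} {E : Finset Seg} {m : Seg → ℕ} (hE : OmegaTropCurve Ω E m)
    {C : PlaneTropData} (hC : ExtendsCurve Ω E m C) {x0 : ℝ × ℝ} (hx : x0 ∈ Ω)
    (hv : ¬ IsVert E x0) (hv' : ¬ ptcVert C x0) :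
    ∃ g : ℝ × ℝ, ∃ c : ℝ, ∀ x, kC C x0 x - kinks E (fun e => (m e : ℤ)) ∅ (fun _ => 0) x0 x =
      g.1 * x.1 + g.2 * x.2 + c := by
  obtain ⟨hP, hsupp, hext⟩ := hC
  obtain ⟨hE1, hpl, hm, hr, -⟩ := hE
  unfold IsVert at hv
  unfold ptcVert at hv'
  push Not at hv hv'
  by_cases hg : x0 ∈ gsupp E
  · obtain ⟨e, he, hxe⟩ := Set.mem_iUnion₂.1 hg
    have kE : ∀ x, kinks E (fun e => (m e : ℤ)) ∅ (fun _ => 0) x0 x =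
        m e * min 0 (dt (prim (e.2 - e.1)) (x - x0)) := by
      intro x
      rw [kinks_seg he hxe _ (by simp)]
      · simp
      · intro e' he' hne hx'
        rcases (hpl e he e' he' hne.symm ⟨hxe, hx'⟩).1 with h | h
        · exact (hv e he).1 h.symm
        · exact (hv e he).2 h.symm
    obtain ⟨l, hl, kc⟩ : ∃ l : ℤ × ℤ, (prim (e.2 - e.1) = l ∨ prim (e.2 - e.1) = -l) ∧
        ∀ x, kC C x0 x = m e * min 0 (dt l (x - x0)) := by
      rcases hext e he with ⟨e', he', hsub, hmm⟩ | ⟨r, hr', hsub, hmm⟩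
      · obtain ⟨hgc, t, ht, hd⟩ := prim_spec (hP.2.1 e' he').2
        have hmem : ∀ y ∈ seg e', ∃ s : ℝ, y = e'.1 + s • toR (prim (e'.2 - e'.1)) := by
          intro y hy
          rw [seg, segment_eq_image'] at hy
          obtain ⟨s, -, rfl⟩ := hy
          refine ⟨s * t, ?_⟩
          rw [mul_smul, ← hd]
        refine ⟨prim (e'.2 - e'.1), sub_prim hgc (hE1 e he).1
          (hmem _ (hsub (left_mem_segment _ _ _))) (hmem _ (hsub (right_mem_segment _ _ _))), ?_⟩
        intro x
        rw [kC_seg hP he' (hsub hxe) (hv'.1 e' he').1.symm (hv'.1 e' he').2.symm, hmm]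
      · have hmem : ∀ y ∈ raySet r, ∃ s : ℝ, y = r.1 + s • toR r.2 := by
          rintro y ⟨s, -, hs⟩
          exact ⟨s, hs⟩
        refine ⟨r.2, sub_prim (hP.2.2.1 r hr').2 (hE1 e he).1
          (hmem _ (hsub (left_mem_segment _ _ _))) (hmem _ (hsub (right_mem_segment _ _ _))), ?_⟩
        intro x
        rw [kC_ray hP hr' (hsub hxe) (hv'.2 r hr').symm, hmm]
    rcases hl with h | h
    · refine ⟨0, 0, fun x => ?_⟩
      rw [kc, kE, h]; simp
    · refine ⟨(-(m e * l.2), m e * l.1), m e * (l.2 * x0.1 - l.1 * x0.2), fun x => ?_⟩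
      rw [kc, kE, h, min_dt_neg]
      simp only [dt, Prod.fst_sub, Prod.snd_sub]
      ring
  · have hn : x0 ∉ ptcSupp C := fun h => hg (hsupp ▸ ⟨h, hx⟩)
    refine ⟨0, 0, fun x => ?_⟩
    rw [kC_none hn, kinks_none _ (by simp)]
    · simp
    · intro e he hx'
      exact hg (Set.mem_iUnion₂.2 ⟨e, he, hx'⟩)

lemma trop_cont {F : ℝ × ℝ → ℝ} (h : IsTropPoly F) : Continuous F := by
  obtain ⟨A, hA, a, h⟩ := h
  rw [show F = fun x => _ from funext h]
  exact Continuous.finset_inf'_apply hA (fun i _ => by fun_prop)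

lemma off_supp {Ω : Set (ℝ × ℝ)} (hΩ : IsLatticePolygon Ω) {C : PlaneTropData}
    (hC : IsPlaneTropCurve C) : ∃ x0 ∈ interior Ω, x0 ∉ ptcSupp C := by
  classical
  set Q : Finset ((ℝ × ℝ) × (ℤ × ℤ)) :=
    C.segs.image (fun e => (e.1, prim (e.2 - e.1))) ∪ C.rays with hQ
  have hQ0 : ∀ q ∈ Q, q.2 ≠ 0 := by
    intro q hq
    rcases Finset.mem_union.1 hq with hq | hq
    · obtain ⟨e, he, rfl⟩ := Finset.mem_image.1 hq
      exact prim_ne_zero (prim_spec (hC.2.1 e he).2).1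
    · exact prim_ne_zero (hC.2.2.1 q hq).2
  have hd : Dense (⋂ q ∈ (Q : Set ((ℝ × ℝ) × (ℤ × ℤ))), {x : ℝ × ℝ | dt q.2 (x - q.1) ≠ 0}) := by
    refine dense_biInter_of_isOpen ?_ Q.countable_toSet ?_
    · intro q _
      refine isOpen_ne_fun ?_ continuous_const
      unfold dt; fun_prop
    · intro q hq
      rw [← compl_compl {x : ℝ × ℝ | dt q.2 (x - q.1) ≠ 0}, ← interior_eq_empty_iff_dense_compl]
      rw [Set.eq_empty_iff_forall_notMem]
      intro x hx
      have h0 : ∀ y ∈ {x : ℝ × ℝ | dt q.2 (x - q.1) ≠ 0}ᶜ, dt q.2 (y - q.1) = 0 :=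
        fun y hy => not_not.1 hy
      refine frontier_of_support (p := (-(q.2.2 : ℝ), (q.2.1 : ℝ)))
        (c := q.2.2 * q.1.1 - q.2.1 * q.1.2) ?_ ?_ ?_ hx
      · intro h'
        rw [Prod.ext_iff] at h'
        simp at h'
        exact hQ0 q hq (Prod.ext h'.2 h'.1)
      · intro y hy
        have := h0 y hy
        simp only [dt, Prod.fst_sub, Prod.snd_sub] at this
        simp only; linarith
      · have := h0 x (interior_subset hx)
        simp only [dt, Prod.fst_sub, Prod.snd_sub] at this
        simp only; linarith
  obtain ⟨x0, hx0, hx0'⟩ := hd.inter_open_nonempty _ isOpen_interior hΩ.2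
  refine ⟨x0, hx0, ?_⟩
  rw [not_mem_ptcSupp]
  have hx1 : ∀ q ∈ Q, dt q.2 (x0 - q.1) ≠ 0 := fun q hq => Set.mem_iInter₂.1 hx0' q hq
  constructor
  · intro e he hxe
    apply hx1 (e.1, prim (e.2 - e.1)) (Finset.mem_union_left _ (Finset.mem_image_of_mem _ he))
    rw [seg, segment_eq_image'] at hxe
    obtain ⟨s, -, rfl⟩ := hxe
    have := dt_prim_zero (hC.2.1 e he).2
    simp only [add_sub_cancel_left]
    simp only [dt, Prod.smul_fst, Prod.smul_snd, smul_eq_mul] at this ⊢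
    linear_combination s * this
  · intro r hr hxr
    apply hx1 r (Finset.mem_union_right _ hr)
    obtain ⟨s, -, rfl⟩ := hxr
    simp [dt, toR]; ring

lemma verts_finite (E : Finset Seg) (C : PlaneTropData) :
    {x | IsVert E x ∨ ptcVert C x}.Finite := by
  classical
  refine ((E.image Prod.fst ∪ E.image Prod.snd) ∪ (C.segs.image Prod.fst ∪ C.segs.image Prod.snd) ∪
    C.rays.image Prod.fst).finite_toSet.subset ?_
  rintro x (⟨e, he, h⟩ | ⟨e, he, h⟩ | ⟨r, hr, h⟩)
  · rcases h with rfl | rfl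
    · simp only [Finset.coe_union, Set.mem_union, Finset.mem_coe]
      exact Or.inl (Or.inl (Or.inl (Finset.mem_image_of_mem _ he)))
    · simp only [Finset.coe_union, Set.mem_union, Finset.mem_coe]
      exact Or.inl (Or.inl (Or.inr (Finset.mem_image_of_mem _ he)))
  · rcases h with rfl | rfl
    · simp only [Finset.coe_union, Set.mem_union, Finset.mem_coe]
      exact Or.inl (Or.inr (Or.inl (Finset.mem_image_of_mem _ he)))
    · simp only [Finset.coe_union, Set.mem_union, Finset.mem_coe]
      exact Or.inl (Or.inr (Or.inr (Finset.mem_image_of_mem _ he)))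
  · subst h
    simp only [Finset.coe_union, Set.mem_union, Finset.mem_coe]
    exact Or.inr (Finset.mem_image_of_mem _ hr)

/-! ## Part 9: final assembly -/

/-- The interior form of the potential of the `Ω`-tropical curve. -/
def OmForm (Ω : Set (ℝ × ℝ)) (E : Finset Seg) (m : Seg → ℕ) (F : ℝ × ℝ → ℝ) : Prop :=
  ∀ x0 ∈ interior Ω, ¬ IsVert E x0 → ∃ g : ℤ × ℤ, ∃ c : ℝ, ∀ᶠ x in 𝓝 x0,
    F x = g.1 * x.1 + g.2 * x.2 + c + kinks E (fun e => (m e : ℤ)) ∅ (fun _ => 0) x0 x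

lemma compare {Ω : Set (ℝ × ℝ)} (hΩ : IsLatticePolygon Ω) {E : Finset Seg} {m : Seg → ℕ}
    (hE : OmegaTropCurve Ω E m) {C : PlaneTropData} (hC : ExtendsCurve Ω E m C)
    {F F0 : ℝ × ℝ → ℝ} (hF : Continuous F) (hF0 : Continuous F0) (h : HasForm C F)
    (h0 : OmForm Ω E m F0) {x0 : ℝ × ℝ} (hx0 : x0 ∈ interior Ω) {g : ℝ × ℝ} {c : ℝ}
    (hg : ∀ᶠ x in 𝓝 x0, F x - F0 x = g.1 * x.1 + g.2 * x.2 + c) :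
    ∀ y ∈ Ω, F y - F0 y = g.1 * y.1 + g.2 * y.2 + c := by
  have hi : ∀ y ∈ interior Ω, F y - F0 y = g.1 * y.1 + g.2 * y.2 + c := by
    refine affine_of_local (D := fun y => F y - F0 y) isOpen_interior (poly_convex hΩ).interior
      (verts_finite E C) (hF.sub hF0).continuousOn ?_ hx0 hg
    intro x hx hxv
    simp only [Set.mem_ofPred_eq, not_or] at hxv
    obtain ⟨g1, c1, e1⟩ := h x hxv.2
    obtain ⟨g2, c2, e2⟩ := h0 x hx hxv.1
    obtain ⟨g3, c3, e3⟩ := kinks_diff hE hC (interior_subset hx) hxv.1 hxv.2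
    refine ⟨_, e1.and e2, g1.1 - g2.1 + g3.1, g1.2 - g2.2 + g3.2, c1 - c2 + c3, ?_⟩
    rintro y ⟨a1, a2⟩
    have a3 := e3 y
    simp only
    rw [a1, a2]
    linear_combination a3
  intro y hy
  rw [← poly_closure hΩ] at hy
  have hcl : IsClosed {y : ℝ × ℝ | F y - F0 y = g.1 * y.1 + g.2 * y.2 + c} :=
    isClosed_eq (hF.sub hF0) (by fun_prop)
  exact closure_minimal (fun z hz => hi z hz) hcl hy

lemma off_data {Ω : Set (ℝ × ℝ)} {E : Finset Seg} {m : Seg → ℕ}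
    {C : PlaneTropData} (hC : ExtendsCurve Ω E m C)
    {F0 : ℝ × ℝ → ℝ} (h0 : OmForm Ω E m F0) {x0 : ℝ × ℝ} (hx0 : x0 ∈ interior Ω)
    (hn : x0 ∉ ptcSupp C) : ¬ ptcVert C x0 ∧
      ∃ g : ℤ × ℤ, ∃ c : ℝ, ∀ᶠ x in 𝓝 x0, F0 x = g.1 * x.1 + g.2 * x.2 + c := by
  have hg : x0 ∉ gsupp E := fun h => by
    rw [← hC.2.1] at h
    exact hn h.1
  have hg' : ∀ e ∈ E, x0 ∉ seg e := fun e he hx' => hg (Set.mem_iUnion₂.2 ⟨e, he, hx'⟩)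
  refine ⟨fun h => hn (vert_supp h), ?_⟩
  have hv : ¬ IsVert E x0 := by
    rintro ⟨e, he, rfl | rfl⟩
    · exact hg' e he (left_mem_segment _ _ _)
    · exact hg' e he (right_mem_segment _ _ _)
  obtain ⟨g, c, hgc⟩ := h0 x0 hx0 hv
  refine ⟨g, c, ?_⟩
  filter_upwards [hgc] with x hx
  rw [hx, kinks_none hg' (by simp), add_zero]

lemma affine_vanish {Ω : Set (ℝ × ℝ)} (hΩ : IsLatticePolygon Ω) {E : Finset Seg} {m : Seg → ℕ}
    (hE : OmegaTropCurve Ω E m) {g : ℝ × ℝ} {c : ℝ}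
    (h : ∀ x ∈ frontier Ω, g.1 * x.1 + g.2 * x.2 + c = 0) :
    ∀ x : ℝ × ℝ, g.1 * x.1 + g.2 * x.2 + c = 0 := by
  obtain ⟨-, -, -, -, -, hfr, -⟩ := hE
  have h1 : ∀ x ∈ Ω, g.1 * x.1 + g.2 * x.2 + c = 0 := by
    intro x hx
    rw [← closure_convexHull_extremePoints (poly_compact hΩ) (poly_convex hΩ)] at hx
    have hcl : IsClosed {y : ℝ × ℝ | g.1 * y.1 + g.2 * y.2 + c = 0} :=
      isClosed_eq (by fun_prop) continuous_const
    have hcv : Convex ℝ {y : ℝ × ℝ | g.1 * y.1 + g.2 * y.2 + c = 0} := by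
      intro y hy z hz a b _ _ hab
      simp only [Set.mem_ofPred_eq, Prod.fst_add, Prod.snd_add, Prod.smul_fst, Prod.smul_snd,
        smul_eq_mul] at hy hz ⊢
      linear_combination a * hy + b * hz - c * hab
    refine closure_minimal (convexHull_min ?_ hcv) hcl hx
    intro y hy
    rw [← hfr] at hy
    exact h y hy.2
  obtain ⟨x0, hx0⟩ := hΩ.2
  have h2 : ∀ᶠ x in 𝓝 x0, g.1 * x.1 + g.2 * x.2 + c =
      (0 : ℝ × ℝ).1 * x.1 + (0 : ℝ × ℝ).2 * x.2 + 0 := by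
    filter_upwards [isOpen_interior.mem_nhds hx0] with x hx
    rw [h1 x (interior_subset hx)]; simp
  obtain ⟨rfl, rfl⟩ := affine_unique h2
  intro x; simp

lemma main_restr {Ω : Set (ℝ × ℝ)} (hΩ : IsLatticePolygon Ω) {E : Finset Seg} {m : Seg → ℕ}
    (hE : OmegaTropCurve Ω E m) {F0 : ℝ × ℝ → ℝ} (hF0 : Continuous F0) (h0 : OmForm Ω E m F0)
    {gA : ℤ × ℤ} {cA : ℝ} (hA : ∀ x ∉ interior Ω, F0 x = gA.1 * x.1 + gA.2 * x.2 + cA)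
    {C : PlaneTropData} (hC : ExtendsCurve Ω E m C) {F : ℝ × ℝ → ℝ} (hF : Continuous F)
    (hz : ∀ x ∈ frontier Ω, F x = 0) (h : HasForm C F) :
    ∀ x ∈ Ω, F x = F0 x - (gA.1 * x.1 + gA.2 * x.2 + cA) := by
  obtain ⟨x0, hx0, hn⟩ := off_supp hΩ hC.1
  obtain ⟨hv, g, c, hg⟩ := off_data hC h0 hx0 hn
  obtain ⟨g1, c1, hg1⟩ := h x0 hv
  have hcmp := compare hΩ hE hC hF hF0 h h0 hx0 (g := (g1.1 - g.1, g1.2 - g.2)) (c := c1 - c) (by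
    filter_upwards [hg, hg1] with x a1 a2
    rw [a1, a2, kC_none hn]; ring)
  have hfrΩ : ∀ x ∈ frontier Ω, x ∈ Ω := fun x hx =>
    (poly_compact hΩ).isClosed.frontier_subset hx
  have hvan := affine_vanish hΩ hE (g := (g1.1 - g.1 + gA.1, g1.2 - g.2 + gA.2))
    (c := c1 - c + cA) (by
      intro x hx
      have b1 := hcmp x (hfrΩ x hx)
      have b2 := hA x hx.2
      have b3 := hz x hx
      simp only at b1 ⊢
      linear_combination b3 - b1 - b2)
  intro x hx
  have b1 := hcmp x hx
  have b2 := hvan x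
  simp only at b1 b2
  linear_combination b1 + b2

lemma form_unique {Ω : Set (ℝ × ℝ)} (hΩ : IsLatticePolygon Ω) {C : PlaneTropData}
    {F G : ℝ × ℝ → ℝ} (hF : Continuous F) (hG : Continuous G) (h : HasForm C F)
    (h' : HasForm C G) (heq : ∀ x ∈ Ω, F x = G x) : F = G := by
  obtain ⟨x0, hx0⟩ := hΩ.2
  have := affine_of_local (D := fun y => F y - G y) (U := Set.univ) isOpen_univ convex_univ
    (verts_finite ∅ C) (hF.sub hG).continuousOn (x0 := x0) (g := 0) (c := 0) ?_ (Set.mem_univ _) ?_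
  · funext y
    have := this y (Set.mem_univ _)
    simp at this
    linarith
  · intro x _ hxv
    simp only [Set.mem_ofPred_eq, not_or] at hxv
    obtain ⟨g1, c1, e1⟩ := h x hxv.2
    obtain ⟨g2, c2, e2⟩ := h' x hxv.2
    refine ⟨_, e1.and e2, g1.1 - g2.1, g1.2 - g2.2, c1 - c2, ?_⟩
    rintro y ⟨a1, a2⟩
    simp only
    rw [a1, a2]
    ring
  · filter_upwards [isOpen_interior.mem_nhds hx0] with x hx
    rw [heq x (interior_subset hx)]; simp

lemma kC_single {C : PlaneTropData} (hC : IsPlaneTropCurve C) {x0 : ℝ × ℝ}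
    (hv : ¬ ptcVert C x0) : ∃ l : ℤ × ℤ, ∃ k : ℝ, 0 ≤ k ∧
      ∀ x, kC C x0 x = k * min 0 (dt l (x - x0)) := by
  unfold ptcVert at hv
  push Not at hv
  by_cases hx : x0 ∈ ptcSupp C
  · rcases mem_ptcSupp.1 hx with ⟨e, he, hxe⟩ | ⟨r, hr, hxr⟩
    · exact ⟨_, _, Nat.cast_nonneg _, kC_seg hC he hxe (hv.1 e he).1.symm (hv.1 e he).2.symm⟩
    · exact ⟨_, _, Nat.cast_nonneg _, kC_ray hC hr hxr (hv.2 r hr).symm⟩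
  · exact ⟨0, 0, le_rfl, fun x => by rw [kC_none hx]; simp⟩

lemma exists_poly {Ω : Set (ℝ × ℝ)} (hΩ : IsLatticePolygon Ω) {E : Finset Seg} {m : Seg → ℕ}
    (hE : OmegaTropCurve Ω E m) {F0 : ℝ × ℝ → ℝ} (hF0 : Continuous F0) (h0 : OmForm Ω E m F0)
    {gA : ℤ × ℤ} {cA : ℝ} (hA : ∀ x ∉ interior Ω, F0 x = gA.1 * x.1 + gA.2 * x.2 + cA)
    {C : PlaneTropData} (hC : ExtendsCurve Ω E m C) :
    ∃ F, IsTropPoly F ∧ (∀ x ∈ frontier Ω, F x = 0) ∧ RepresentsCornerLocus F C := by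
  obtain ⟨F, hF, M, hM⟩ := graph_potential C.segs (fun e => (C.msegs e : ℤ)) C.rays
    (fun r => (C.mrays r : ℤ)) (fun e he => (hC.1.2.1 e he).2) (fun r hr => (hC.1.2.2.1 r hr).2)
    (ptc_grBal hC.1)
  have hM' : ∀ x0, ¬ ptcVert C x0 → ∃ g : ℤ × ℤ, |g.1| ≤ M ∧ |g.2| ≤ M ∧ ∃ c : ℝ,
      ∀ᶠ x in 𝓝 x0, F x = g.1 * x.1 + g.2 * x.2 + c + kC C x0 x := by
    intro x0 hv
    unfold ptcVert at hv
    push Not at hv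
    exact hM x0 hv.1 hv.2
  have hform : HasForm C F := by
    intro x0 hv
    obtain ⟨g, -, -, c, hg⟩ := hM' x0 hv
    exact ⟨(g.1, g.2), c, hg⟩
  obtain ⟨x0, hx0, hn⟩ := off_supp hΩ hC.1
  obtain ⟨hv, g, c, hg⟩ := off_data hC h0 hx0 hn
  obtain ⟨g1, -, -, c1, hg1⟩ := hM' x0 hv
  have hcmp := compare hΩ hE hC hF hF0 hform h0 hx0
    (g := ((g1.1 : ℝ) - g.1, (g1.2 : ℝ) - g.2)) (c := c1 - c) (by
    filter_upwards [hg, hg1] with x a1 a2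
    rw [a1, a2, kC_none hn]; ring)
  set q : ℤ × ℤ := (g1.1 - g.1 + gA.1, g1.2 - g.2 + gA.2) with hq
  set F' : ℝ × ℝ → ℝ := fun x => F x - (q.1 * x.1 + q.2 * x.2 + (c1 - c + cA)) with hF'
  have hloc : ∀ x0, ¬ ptcVert C x0 → ∃ g : ℤ × ℤ, |g.1| ≤ M + |q.1| + |q.2| ∧
      |g.2| ≤ M + |q.1| + |q.2| ∧ ∃ c : ℝ,
      ∀ᶠ x in 𝓝 x0, F' x = g.1 * x.1 + g.2 * x.2 + c + kC C x0 x := by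
    intro x0 hv
    obtain ⟨g, b1, b2, c', hg⟩ := hM' x0 hv
    refine ⟨g - q, ?_, ?_, c' - (c1 - c + cA), ?_⟩
    · have := abs_sub g.1 q.1
      have := abs_nonneg q.2
      simp only [Prod.fst_sub]; linarith
    · have := abs_sub g.2 q.2
      have := abs_nonneg q.1
      simp only [Prod.snd_sub]; linarith
    · filter_upwards [hg] with x hx
      simp only [hF', hx, Prod.fst_sub, Prod.snd_sub, Int.cast_sub]
      ring
  have hF'c : Continuous F' := by
    refine hF.sub ?_
    fun_prop
  refine ⟨F', ?_, ?_, rep_of_form hC.1 ?_⟩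
  · refine trop_of_local (verts_finite ∅ C) hF'c (M + |q.1| + |q.2|) ?_
    intro x0 hv
    simp only [Set.mem_ofPred_eq, not_or] at hv
    obtain ⟨g, b1, b2, c', hg⟩ := hloc x0 hv.2
    obtain ⟨l, k, hk, hkl⟩ := kC_single hC.1 hv.2
    refine ⟨g, b1, b2, c', l, k, hk, ?_⟩
    filter_upwards [hg] with x hx
    rw [hx, hkl]
  · intro x hx
    have b1 := hcmp x ((poly_compact hΩ).isClosed.frontier_subset hx)
    have b2 := hA x hx.2
    simp only [hF', hq] at b1 ⊢
    push_cast
    linear_combination b1 + b2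
  · intro x0 hv
    obtain ⟨g, -, -, c, hg⟩ := hloc x0 hv
    exact ⟨(g.1, g.2), c, hg⟩

/-- Let `(E, m)` be an `Ω`-tropical curve and `C` a plane tropical
curve with `C ∩ Ω = (E, m)` as weighted graphs. Then there is a unique tropical
polynomial `F'` vanishing on `∂Ω` whose corner locus, with its canonical weights, is
`C`; moreover the restriction of `F'` to `Ω` does not depend on the choice of the
extension `C`. -/
theorem statement8 (Ω : Set (ℝ × ℝ)) (hΩ : IsLatticePolygon Ω)
    (E : Finset Seg) (m : Seg → ℕ) (hE : OmegaTropCurve Ω E m)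
    (C : PlaneTropData) (hC : ExtendsCurve Ω E m C) :
    (∃! F' : ℝ × ℝ → ℝ, IsTropPoly F' ∧ (∀ x ∈ frontier Ω, F' x = 0) ∧
      RepresentsCornerLocus F' C) ∧
    ∀ F₁ F₂ : ℝ × ℝ → ℝ, IsOmegaPolyOf Ω E m F₁ → IsOmegaPolyOf Ω E m F₂ →
      ∀ x ∈ Ω, F₁ x = F₂ x := by

  obtain ⟨F0, hF0, h0, hout⟩ := omega_potential hΩ hE
  obtain ⟨gA, cA, hA⟩ := affine_outside hΩ hF0 hout
  constructor
  · obtain ⟨F, h1, h2, h3⟩ := exists_poly hΩ hE hF0 h0 hA hC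
    refine ⟨F, ⟨h1, h2, h3⟩, ?_⟩
    rintro G ⟨k1, k2, k3⟩
    refine form_unique hΩ (trop_cont k1) (trop_cont h1) (form_of_rep hC.1 k3)
      (form_of_rep hC.1 h3) ?_
    intro x hx
    rw [main_restr hΩ hE hF0 h0 hA hC (trop_cont k1) k2 (form_of_rep hC.1 k3) x hx,
      main_restr hΩ hE hF0 h0 hA hC (trop_cont h1) h2 (form_of_rep hC.1 h3) x hx]
  · rintro F₁ F₂ ⟨G₁, C₁, e1, t1, z1, r1, q1⟩ ⟨G₂, C₂, e2, t2, z2, r2, q2⟩ x hx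
    rw [q1 x hx, q2 x hx,
      main_restr hΩ hE hF0 h0 hA e1 (trop_cont t1) z1 (form_of_rep e1.1 r1) x hx,
      main_restr hΩ hE hF0 h0 hA e2 (trop_cont t2) z2 (form_of_rep e2.1 r2) x hx]
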